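/- arXiv:2105.00413 — 4 statements merged into one kernel-verified Lean document; each statement's English description precedes it below -/
import Mathlib

section
/- For a ring R and non-negative integers n, k: l.n.sp.gldim(R) ≤ k if and only if every (n,k)-weak cotorsion right R-module is injective. -/
/-!
Common definitions for formalizing "(n,k)-weak cotorsion modules" over an arbitrary
(not necessarily commutative) ring `R`.  Left `R`-modules are objects of
`ModuleCat R`, right `R`-modules are objects of `ModuleCat Rᵐᵒᵖ`.

Since Mathlib does not provide `Tor` of a right module with a left module over a
noncommutative ring, we encode the vanishing of `Tor_i^R(N, M)` (for `N` a right
module and `M` a left module) by the equivalent condition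
`Ext^i_{Rᵐᵒᵖ}(N, M⋆) = 0`, where `M⋆ = Hom_ℤ(M, ℚ/ℤ)` is the character module
(a right module).  This is equivalent because `ℚ/ℤ` is an injective cogenerator:
`Ext^i_{Rᵐᵒᵖ}(N, M⋆) ≅ (Tor_i^R(N, M))⋆`, and an abelian group vanishes iff its
character group does.
-/

open CategoryTheory

universe u

noncomputable section

/-- The character group `Hom_ℤ(N, ℚ/ℤ)`. -/
def CharGroup (N : Type u) [AddCommGroup N] : Type u := N →+ AddCircle (1 : ℚ)

instance (N : Type u) [AddCommGroup N] : AddCommGroup (CharGroup N) :=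
  inferInstanceAs (AddCommGroup (N →+ AddCircle (1 : ℚ)))

namespace CharGroup

variable {N : Type u} [AddCommGroup N]

/-- View an element of the character group as an additive monoid hom. -/
def toHom (f : CharGroup N) : N →+ AddCircle (1 : ℚ) := f

/-- Build an element of the character group from an additive monoid hom. -/
def ofHom (f : N →+ AddCircle (1 : ℚ)) : CharGroup N := f

theorem hom_ext {f g : CharGroup N} (h : ∀ m, toHom f m = toHom g m) : f = g :=
  AddMonoidHom.ext h

end CharGroup

open CharGroup in
/-- Left module structure on the character group of a right module. -/
instance charGroupModuleLeft (R : Type u) [Ring R] (N : Type u) [AddCommGroup N]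
    [Module Rᵐᵒᵖ N] : Module R (CharGroup N) where
  smul r f := ofHom ((toHom f).comp
    (AddMonoidHom.mk' (fun m => MulOpposite.op r • m) (fun a b => smul_add _ a b)))
  one_smul f := hom_ext fun m => by
    show toHom f (MulOpposite.op (1 : R) • m) = toHom f m
    rw [MulOpposite.op_one, one_smul]
  mul_smul r s f := hom_ext fun m => by
    show toHom f (MulOpposite.op (r * s) • m)
      = toHom f (MulOpposite.op s • MulOpposite.op r • m)
    rw [MulOpposite.op_mul, mul_smul]
  smul_zero r := CharGroup.hom_ext fun m => rfl
  smul_add r f g := CharGroup.hom_ext fun m => rfl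
  add_smul r s f := hom_ext fun m => by
    show toHom f (MulOpposite.op (r + s) • m)
      = toHom f (MulOpposite.op r • m) + toHom f (MulOpposite.op s • m)
    rw [MulOpposite.op_add, add_smul, map_add]
  zero_smul f := hom_ext fun m => by
    show toHom f (MulOpposite.op (0 : R) • m) = 0
    rw [MulOpposite.op_zero, zero_smul, map_zero]

open CharGroup in
/-- Right module structure on the character group of a left module. -/
instance charGroupModuleRight (R : Type u) [Ring R] (N : Type u) [AddCommGroup N]
    [Module R N] : Module Rᵐᵒᵖ (CharGroup N) where
  smul r f := ofHom ((toHom f).comp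
    (AddMonoidHom.mk' (fun m => r.unop • m) (fun a b => smul_add _ a b)))
  one_smul f := hom_ext fun m => by
    show toHom f ((1 : Rᵐᵒᵖ).unop • m) = toHom f m
    rw [MulOpposite.unop_one, one_smul]
  mul_smul r s f := hom_ext fun m => by
    show toHom f ((r * s).unop • m) = toHom f (s.unop • r.unop • m)
    rw [MulOpposite.unop_mul, mul_smul]
  smul_zero r := CharGroup.hom_ext fun m => rfl
  smul_add r f g := CharGroup.hom_ext fun m => rfl
  add_smul r s f := hom_ext fun m => by
    show toHom f ((r + s).unop • m) = toHom f (r.unop • m) + toHom f (s.unop • m)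
    rw [MulOpposite.unop_add, add_smul, map_add]
  zero_smul f := hom_ext fun m => by
    show toHom f ((0 : Rᵐᵒᵖ).unop • m) = 0
    rw [MulOpposite.unop_zero, zero_smul, map_zero]

variable (R : Type u) [Ring R]

/-- `extVanish S i A B` says that `Ext^i_S(A, B) = 0`. -/
def extVanish (S : Type u) [Ring S] (i : ℕ) (A B : ModuleCat.{u} S) : Prop :=
  Subsingleton (((Ext ℤ (ModuleCat.{u} S) i).obj (Opposite.op A)).obj B)

/-- The character module of a right `R`-module, as a left `R`-module. -/
def charLeft (N : ModuleCat.{u} Rᵐᵒᵖ) : ModuleCat.{u} R :=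
  ModuleCat.of R (CharGroup N)

/-- The character module of a left `R`-module, as a right `R`-module. -/
def charRight (M : ModuleCat.{u} R) : ModuleCat.{u} Rᵐᵒᵖ :=
  ModuleCat.of Rᵐᵒᵖ (CharGroup M)

/-- `torVanish R i N M` encodes `Tor_i^R(N, M) = 0` for a right module `N` and a
left module `M`, via the character module duality
`Ext^i_R(M, N⋆) ≅ (Tor_i^R(N, M))⋆`. -/
def torVanish (i : ℕ) (N : ModuleCat.{u} Rᵐᵒᵖ) (M : ModuleCat.{u} R) : Prop :=
  extVanish R i M (charLeft R N)

/-- `K` is a special super finitely presented `S`-module (for the parameter `n`):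
`K` is the image of `F_n → F_{n-1}` in a projective resolution
`⋯ → F_{n+1} → F_n → ⋯ → F_0 → U → 0` of some module `U` in which `F_i` is finitely
generated projective for all `i ≥ n`.  (For `n = 0` the distinguished module is `U`
itself, matching `Ext^{n+1}(U, -) ≅ Ext^1(K_{n-1}, -)`.) -/
def IsSpecialSFP (S : Type u) [Ring S] (n : ℕ) (K : ModuleCat.{u} S) : Prop :=
  ∃ (U : ModuleCat.{u} S) (F : ℕ → ModuleCat.{u} S)
    (d : ∀ i, F (i + 1) →ₗ[S] F i) (π : F 0 →ₗ[S] U),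
      (∀ i, Module.Projective S (F i)) ∧
      (∀ i, n ≤ i → Module.Finite S (F i)) ∧
      Function.Surjective π ∧ Function.Exact (d 0) π ∧
      (∀ i, Function.Exact (d (i + 1)) (d i)) ∧
      (if n = 0 then Nonempty ((K : Type u) ≃ₗ[S] U)
       else Nonempty ((K : Type u) ≃ₗ[S] LinearMap.range (d (n - 1))))

/-- The `n`-weak injective dimension of a left `S`-module `M` is at most `k`. -/
def nwidLE (S : Type u) [Ring S] (n k : ℕ) (M : ModuleCat.{u} S) : Prop :=
  ∀ K : ModuleCat.{u} S, IsSpecialSFP S n K → extVanish S (k + 1) K M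

/-- The `n`-weak flat dimension of a right `R`-module `N` is at most `k`:
`Tor_{k+1}^R(N, K) = 0` for every special super finitely presented left module `K`. -/
def nwfdLE (n k : ℕ) (N : ModuleCat.{u} Rᵐᵒᵖ) : Prop :=
  ∀ K : ModuleCat.{u} R, IsSpecialSFP R n K → torVanish R (k + 1) N K

/-- A right `R`-module `M` is `(n,k)`-weak cotorsion if `Ext^1(N, M) = 0` for every
right module `N` of `n`-weak flat dimension at most `k`. -/
def IsNKWeakCotorsion (n k : ℕ) (M : ModuleCat.{u} Rᵐᵒᵖ) : Prop :=
  ∀ N : ModuleCat.{u} Rᵐᵒᵖ, nwfdLE R n k N → extVanish Rᵐᵒᵖ 1 N M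

/-- Projective dimension at most `k`, via Ext vanishing. -/
def pdLE (S : Type u) [Ring S] (k : ℕ) (K : ModuleCat.{u} S) : Prop :=
  ∀ M : ModuleCat.{u} S, extVanish S (k + 1) K M

/-- Injective dimension at most `k`, via Ext vanishing. -/
def idLE (S : Type u) [Ring S] (k : ℕ) (M : ModuleCat.{u} S) : Prop :=
  ∀ N : ModuleCat.{u} S, extVanish S (k + 1) N M

/-- Flat dimension of a right module at most `k`, via Tor vanishing. -/
def fdLE (k : ℕ) (N : ModuleCat.{u} Rᵐᵒᵖ) : Prop :=
  ∀ A : ModuleCat.{u} R, torVanish R (k + 1) N A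

/-- `l.n.sp.gldim(R) ≤ k` : every special super finitely presented left module has
projective dimension at most `k`. -/
def lnspGldimLE (n k : ℕ) : Prop :=
  ∀ K : ModuleCat.{u} R, IsSpecialSFP R n K → pdLE R k K

/-- `w.gl.dim(R) ≤ k`. -/
def wGldimLE (k : ℕ) : Prop :=
  ∀ N : ModuleCat.{u} Rᵐᵒᵖ, fdLE R k N

/-- A right `R`-module `M` is `k`-cotorsion if `Ext^1(F, M) = 0` for every right
module `F` of flat dimension at most `k`. -/
def IsKCotorsion (k : ℕ) (M : ModuleCat.{u} Rᵐᵒᵖ) : Prop :=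
  ∀ F : ModuleCat.{u} Rᵐᵒᵖ, fdLE R k F → extVanish Rᵐᵒᵖ 1 F M

/-- `φ : E → D` is a `𝒞`-precover of `D`. -/
def IsPrecover (S : Type u) [Ring S] (𝒞 : ModuleCat.{u} S → Prop)
    (E D : ModuleCat.{u} S) (φ : E →ₗ[S] D) : Prop :=
  𝒞 E ∧ ∀ F : ModuleCat.{u} S, 𝒞 F → ∀ g : F →ₗ[S] D, ∃ h : F →ₗ[S] E, φ ∘ₗ h = g

/-- `φ : E → D` is a `𝒞`-cover of `D`. -/
def IsCover (S : Type u) [Ring S] (𝒞 : ModuleCat.{u} S → Prop)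
    (E D : ModuleCat.{u} S) (φ : E →ₗ[S] D) : Prop :=
  IsPrecover S 𝒞 E D φ ∧ ∀ g : E →ₗ[S] E, φ ∘ₗ g = φ → Function.Bijective g

/-- `f : X → F` is a `𝒞`-preenvelope of `X`. -/
def IsPreenvelope (S : Type u) [Ring S] (𝒞 : ModuleCat.{u} S → Prop)
    (X F : ModuleCat.{u} S) (f : X →ₗ[S] F) : Prop :=
  𝒞 F ∧ ∀ F' : ModuleCat.{u} S, 𝒞 F' → ∀ g : X →ₗ[S] F', ∃ h : F →ₗ[S] F', h ∘ₗ f = g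

/-- A module is reduced if it has no nonzero injective submodules. -/
def IsReducedModule (S : Type u) [Ring S] (M : ModuleCat.{u} S) : Prop :=
  ∀ N : Submodule S M, Module.Injective S N → N = ⊥

/-- `D` is an `m`-th cosyzygy of `M`: there is an exact sequence
`0 → M → E^0 → ⋯ → E^{m-1} → D → 0` with each `E^i` injective. -/
def IsCosyzygy (S : Type u) [Ring S] : ℕ → ModuleCat.{u} S → ModuleCat.{u} S → Prop
  | 0, M, D => Nonempty ((M : Type u) ≃ₗ[S] D)
  | m + 1, M, D => ∃ (C E : ModuleCat.{u} S), IsCosyzygy S m M C ∧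
      Module.Injective S E ∧
      ∃ (ι : C →ₗ[S] E) (p : E →ₗ[S] D),
        Function.Injective ι ∧ Function.Surjective p ∧ Function.Exact ι p


/-- A left `R`-module `F` is flat: `Tor_1(A, F) = 0` for every right module `A`
(encoded via character duality, as above). -/
def IsFlatModule (R : Type u) [Ring R] (F : ModuleCat.{u} R) : Prop :=
  ∀ A : ModuleCat.{u} Rᵐᵒᵖ, torVanish R 1 A F

end

namespace Aux14

section homological
variable {S : Type u} [Ring S]

/-- The chain complex attached to concrete data. -/
def cx (F : ℕ → ModuleCat.{u} S)
    (d : ∀ i, F (i + 1) →ₗ[S] F i) (he : ∀ i, Function.Exact (d (i + 1)) (d i)) :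
    ChainComplex (ModuleCat.{u} S) ℕ :=
  ChainComplex.of F (fun i => ModuleCat.ofHom (d i)) (fun i => by
        ext x; exact (he i).apply_apply_eq_zero x)

theorem cx_d (F : ℕ → ModuleCat.{u} S)
    (d : ∀ i, F (i + 1) →ₗ[S] F i) (he : ∀ i, Function.Exact (d (i + 1)) (d i)) (i : ℕ) :
    (cx F d he).d (i + 1) i = ModuleCat.ofHom (d i) :=
  ChainComplex.of_d F (fun i => ModuleCat.ofHom (d i)) i

theorem exists_res {K : ModuleCat.{u} S} (F : ℕ → ModuleCat.{u} S)
    (d : ∀ i, F (i + 1) →ₗ[S] F i) (π : F 0 →ₗ[S] K)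
    (hp : ∀ i, Module.Projective S (F i)) (hs : Function.Surjective π)
    (h0 : Function.Exact (d 0) π) (he : ∀ i, Function.Exact (d (i + 1)) (d i)) :
    ∃ P : ProjectiveResolution K, P.complex = cx F d he := by
  have hz : (cx F d he).d 1 0 ≫ (ModuleCat.ofHom π : F 0 ⟶ K) = 0 := by
    rw [cx_d F d he 0]
    ext x; exact h0.apply_apply_eq_zero x
  refine ⟨{ complex := cx F d he
            projective := fun i => ?_
            π := (ChainComplex.toSingle₀Equiv (cx F d he) _).symm ⟨ModuleCat.ofHom π, hz⟩
            quasiIso := ⟨fun m => ?_⟩ }, rfl⟩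
  · exact (IsProjective.iff_projective (R := S) (F i)).1 (hp i)
  · cases m with
    | zero =>
      rw [ChainComplex.quasiIsoAt₀_iff, ShortComplex.quasiIso_iff_of_zeros' _ rfl rfl rfl]
      constructor
      · rw [ShortComplex.ShortExact.moduleCat_exact_iff_function_exact]
        have e2 := ChainComplex.toSingle₀Equiv_symm_apply_f_zero (C := cx F d he)
          (ModuleCat.ofHom π) hz
        have e3 : Function.Exact ((cx F d he).d 1 0) (ModuleCat.ofHom π) := by
          rw [cx_d F d he 0]; exact h0
        rw [← e2] at e3
        exact e3
      · have e2 := ChainComplex.toSingle₀Equiv_symm_apply_f_zero (C := cx F d he)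
          (ModuleCat.ofHom π) hz
        have e3 : Epi (ModuleCat.ofHom π) := (ModuleCat.epi_iff_surjective _).2 hs
        rw [← e2] at e3
        exact e3
    | succ m =>
      rw [quasiIsoAt_iff_exactAt' (hL := ChainComplex.exactAt_succ_single_obj ..),
          HomologicalComplex.exactAt_iff' _ (m + 2) (m + 1) m (by simp) (by simp),
          ShortComplex.ShortExact.moduleCat_exact_iff_function_exact]
      change Function.Exact ((cx F d he).d (m + 1 + 1) (m + 1)) ((cx F d he).d (m + 1) m)
      rw [cx_d F d he m, cx_d F d he (m + 1)]
      exact he m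

theorem extVanish_iff {K : ModuleCat.{u} S} (F : ℕ → ModuleCat.{u} S)
    (d : ∀ i, F (i + 1) →ₗ[S] F i) (π : F 0 →ₗ[S] K)
    (hp : ∀ i, Module.Projective S (F i)) (hs : Function.Surjective π)
    (h0 : Function.Exact (d 0) π) (he : ∀ i, Function.Exact (d (i + 1)) (d i))
    (k : ℕ) (M : ModuleCat.{u} S) :
    extVanish S (k + 1) K M ↔ ∀ φ : F (k + 1) →ₗ[S] M, φ ∘ₗ d (k + 1) = 0 →
      ∃ ψ : F k →ₗ[S] M, ψ ∘ₗ d k = φ := by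
  obtain ⟨P, hP⟩ := exists_res F d π hp hs h0 he
  unfold extVanish
  rw [← ModuleCat.isZero_iff_subsingleton] 
  rw [(P.isoExt (R := ℤ) (k+1) M).isZero_iff, ← HomologicalComplex.exactAt_iff_isZero_homology,
    HomologicalComplex.exactAt_iff' _ k (k + 1) (k + 2) (by simp) (by simp),
    ShortComplex.moduleCat_exact_iff, hP]
  change (∀ φ : F (k + 1) ⟶ M, (cx F d he).d (k + 1 + 1) (k + 1) ≫ φ = 0 →
    ∃ ψ : F k ⟶ M, (cx F d he).d (k + 1) k ≫ ψ = φ) ↔ _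
  rw [cx_d F d he k, cx_d F d he (k + 1)]
  constructor
  · intro h φ hφ
    obtain ⟨ψ, hψ⟩ := h (ModuleCat.ofHom φ) (by
      ext x; exact LinearMap.congr_fun hφ x)
    exact ⟨ψ.hom, congrArg ModuleCat.Hom.hom hψ⟩
  · intro h φ hφ
    obtain ⟨ψ, hψ⟩ := h φ.hom (congrArg ModuleCat.Hom.hom hφ)
    exact ⟨ModuleCat.ofHom ψ, by ext x; exact LinearMap.congr_fun hψ x⟩

/-- Every module has a concrete projective resolution. -/
theorem exists_concrete (K : ModuleCat.{u} S) : ∃ (F : ℕ → ModuleCat.{u} S)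
    (d : ∀ i, F (i + 1) →ₗ[S] F i) (π : F 0 →ₗ[S] K),
    (∀ i, Module.Projective S (F i)) ∧ Function.Surjective π ∧
    Function.Exact (d 0) π ∧ ∀ i, Function.Exact (d (i + 1)) (d i) := by
  let P := ProjectiveResolution.of K
  refine ⟨P.complex.X, fun i => (P.complex.d (i + 1) i).hom, (P.π.f 0).hom, ?_, ?_, ?_, ?_⟩
  · intro i
    exact (IsProjective.iff_projective (R := S) _).2 (P.projective i)
  · exact (ModuleCat.epi_iff_surjective (P.π.f 0)).1 inferInstance
  · have := ShortComplex.exact_of_g_is_cokernel (ShortComplex.mk _ _ P.complex_d_comp_π_f_zero)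
      P.isColimitCokernelCofork
    exact (ShortComplex.ShortExact.moduleCat_exact_iff_function_exact _).1 this
  · intro i
    exact (ShortComplex.ShortExact.moduleCat_exact_iff_function_exact _).1 (P.exact_succ i)

/-- Prepend a module to a sequence. -/
def cons (P : ModuleCat.{u} S) (F : ℕ → ModuleCat.{u} S) : ℕ → ModuleCat.{u} S
  | 0 => P
  | i + 1 => F i

/-- Prepend a map to a sequence of maps. -/
def consd (P : ModuleCat.{u} S) (F : ℕ → ModuleCat.{u} S) (d : ∀ i, F (i + 1) →ₗ[S] F i)
    (t : F 0 →ₗ[S] P) : ∀ i, cons P F (i + 1) →ₗ[S] cons P F i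
  | 0 => t
  | i + 1 => d i

/-- `Ext^1` via a single projective presentation. -/
theorem extVanish_one_iff {N P : ModuleCat.{u} S} [Module.Projective S P]
    (p : P →ₗ[S] N) (hp : Function.Surjective p) (M : ModuleCat.{u} S) :
    extVanish S 1 N M ↔ ∀ h : LinearMap.ker p →ₗ[S] M, ∃ ψ : P →ₗ[S] M,
      ∀ x : LinearMap.ker p, ψ x = h x := by
  obtain ⟨F, d, π, hF, hs, h0, he⟩ := exists_concrete (ModuleCat.of S (LinearMap.ker p))
  have key := extVanish_iff (K := N) (cons P F)
    (consd P F d ((LinearMap.ker p).subtype ∘ₗ π)) p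
    (fun i => by cases i with
      | zero => assumption
      | succ i => exact hF i) hp
    (fun x => by
      constructor
      · intro hx
        obtain ⟨y, hy⟩ := hs ⟨x, hx⟩
        exact ⟨y, congrArg Subtype.val hy⟩
      · rintro ⟨y, rfl⟩
        exact (π y).2)
    (fun i => by
      cases i with
      | zero =>
        intro x
        refine Iff.trans ?_ (h0 x)
        exact Submodule.coe_eq_zero (x := π x)
      | succ i => exact he i) 0 M
  rw [key]
  change (∀ φ : F 0 →ₗ[S] M, φ ∘ₗ d 0 = 0 →
    ∃ ψ : P →ₗ[S] M, ψ ∘ₗ ((LinearMap.ker p).subtype ∘ₗ π) = φ) ↔ _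
  constructor
  · intro H h
    obtain ⟨ψ, hψ⟩ := H (h ∘ₗ π) (by ext x; simp [h0.apply_apply_eq_zero x])
    refine ⟨ψ, fun x => ?_⟩
    obtain ⟨y, rfl⟩ := hs x
    exact LinearMap.congr_fun hψ y
  · intro H φ hφ
    have hk : LinearMap.ker π ≤ LinearMap.ker φ := by
      intro x hx
      obtain ⟨y, rfl⟩ := (h0 x).1 hx
      exact LinearMap.congr_fun hφ y
    let e := π.quotKerEquivOfSurjective hs
    obtain ⟨ψ, hψ⟩ := H ((LinearMap.ker π).liftQ φ hk ∘ₗ e.symm.toLinearMap)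
    refine ⟨ψ, ?_⟩
    ext x
    have h1 := hψ (π x)
    have h2 : e.symm (π x) = (LinearMap.ker π).mkQ x := by
      rw [LinearEquiv.symm_apply_eq]; rfl
    have h3 : ((LinearMap.ker π).liftQ φ hk ∘ₗ e.symm.toLinearMap) (π x) = φ x := by
      change (LinearMap.ker π).liftQ φ hk (e.symm (π x)) = _
      rw [h2]; rfl
    exact h1.trans h3

theorem injective_of_ext {M : ModuleCat.{u} S}
    (h : ∀ N : ModuleCat.{u} S, extVanish S 1 N M) : Module.Injective S M := by
  refine ⟨fun X Y _ _ _ _ f hf g => ?_⟩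
  let N := ModuleCat.of S (Y ⧸ LinearMap.range f)
  let P := ModuleCat.of S (Y →₀ S)
  let q : P →ₗ[S] Y := Finsupp.linearCombination S id
  have hq : Function.Surjective q := Finsupp.linearCombination_id_surjective S Y
  let p : P →ₗ[S] N := (LinearMap.range f).mkQ ∘ₗ q
  have hp : Function.Surjective p := (Submodule.mkQ_surjective _).comp hq
  have hk : ∀ x : LinearMap.ker p, q x ∈ LinearMap.range f := fun x =>
    (Submodule.Quotient.mk_eq_zero _).1 x.2
  let e := LinearEquiv.ofInjective f hf
  let t : LinearMap.ker p →ₗ[S] X := e.symm.toLinearMap ∘ₗ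
    (LinearMap.codRestrict (LinearMap.range f) (q ∘ₗ (LinearMap.ker p).subtype) hk)
  have ht : ∀ x : LinearMap.ker p, f (t x) = q x := fun x => by
    have : e (t x) = ⟨q x, hk x⟩ := e.apply_symm_apply _
    exact congrArg Subtype.val this
  have : Module.Projective S P := inferInstanceAs (Module.Projective S (Y →₀ S))
  obtain ⟨ψ, hψ⟩ := (extVanish_one_iff p hp M).1 (h N) (g ∘ₗ t)
  have hker : LinearMap.ker q ≤ LinearMap.ker ψ := by
    intro x hx
    have hx' : q x = 0 := hx
    have hxp : x ∈ LinearMap.ker p := by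
      change (LinearMap.range f).mkQ (q x) = 0
      rw [hx', map_zero]
    have h1 := hψ ⟨x, hxp⟩
    have h2 : t ⟨x, hxp⟩ = 0 := hf (by rw [ht, map_zero]; exact hx')
    change ψ x = 0
    rw [LinearMap.comp_apply, h2, map_zero] at h1
    exact h1
  let e' := q.quotKerEquivOfSurjective hq
  refine ⟨(LinearMap.ker q).liftQ ψ hker ∘ₗ e'.symm.toLinearMap, fun x => ?_⟩
  obtain ⟨y, hy⟩ := hq (f x)
  have h2 : e'.symm (f x) = (LinearMap.ker q).mkQ y := by
    rw [LinearEquiv.symm_apply_eq]; exact hy.symm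
  have hyp : y ∈ LinearMap.ker p := by
    change (LinearMap.range f).mkQ (q y) = 0
    rw [hy]; exact (Submodule.Quotient.mk_eq_zero _).2 ⟨x, rfl⟩
  change (LinearMap.ker q).liftQ ψ hker (e'.symm (f x)) = _
  rw [h2]
  change ψ y = g x
  have h1 := hψ ⟨y, hyp⟩
  have h3 : t ⟨y, hyp⟩ = x := hf (by rw [ht]; exact hy)
  rw [LinearMap.comp_apply, h3] at h1
  exact h1

end homological

section chars
open CharGroup
variable {R : Type u} [Ring R]

theorem smulR_apply {A : Type u} [AddCommGroup A] [Module R A] (r : Rᵐᵒᵖ) (c : CharGroup A)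
    (a : A) : toHom (r • c) a = toHom c (r.unop • a) := rfl

theorem smulL_apply {A : Type u} [AddCommGroup A] [Module Rᵐᵒᵖ A] (r : R) (c : CharGroup A)
    (a : A) : toHom (r • c) a = toHom c (MulOpposite.op r • a) := rfl

theorem add_app {A : Type u} [AddCommGroup A] (c c' : CharGroup A)
    (a : A) : toHom (c + c') a = toHom c a + toHom c' a := rfl

theorem sub_app {A : Type u} [AddCommGroup A] (c c' : CharGroup A)
    (a : A) : toHom (c - c') a = toHom c a - toHom c' a := rfl

theorem zero_app {A : Type u} [AddCommGroup A]
    (a : A) : toHom (0 : CharGroup A) a = 0 := rfl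

/-- dual of a map of left modules -/
def dualR {A B : Type u} [AddCommGroup A] [AddCommGroup B] [Module R A] [Module R B]
    (f : A →ₗ[R] B) : CharGroup B →ₗ[Rᵐᵒᵖ] CharGroup A where
  toFun c := ofHom ((toHom c).comp f.toAddMonoidHom)
  map_add' c c' := rfl
  map_smul' r c := hom_ext fun a => by
    change toHom c (r.unop • f a) = toHom c (f (r.unop • a))
    rw [f.map_smul]

/-- dual of a map of right modules -/
def dualL {A B : Type u} [AddCommGroup A] [AddCommGroup B] [Module Rᵐᵒᵖ A] [Module Rᵐᵒᵖ B]
    (f : A →ₗ[Rᵐᵒᵖ] B) : CharGroup B →ₗ[R] CharGroup A where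
  toFun c := ofHom ((toHom c).comp f.toAddMonoidHom)
  map_add' c c' := rfl
  map_smul' r c := hom_ext fun a => by
    change toHom c (MulOpposite.op r • f a) = toHom c (f (MulOpposite.op r • a))
    rw [f.map_smul]

theorem dualR_apply {A B : Type u} [AddCommGroup A] [AddCommGroup B] [Module R A] [Module R B]
    (f : A →ₗ[R] B) (c : CharGroup B) (a : A) : toHom (dualR f c) a = toHom c (f a) := rfl

theorem dualL_apply {A B : Type u} [AddCommGroup A] [AddCommGroup B] [Module Rᵐᵒᵖ A]
    [Module Rᵐᵒᵖ B]
    (f : A →ₗ[Rᵐᵒᵖ] B) (c : CharGroup B) (a : A) : toHom (dualL f c) a = toHom c (f a) := rfl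

/-- swap the arguments of a pairing -/
def flipL {A B : Type u} [AddCommGroup A] [AddCommGroup B] [Module R A] [Module Rᵐᵒᵖ B]
    (f : A →ₗ[R] CharGroup B) : B →ₗ[Rᵐᵒᵖ] CharGroup A where
  toFun b := ofHom (AddMonoidHom.mk' (fun a => toHom (f a) b) (fun a a' => by
    rw [map_add, add_app]))
  map_add' b b' := hom_ext fun a => map_add (toHom (f a)) b b'
  map_smul' r b := hom_ext fun a => by
    change toHom (f a) (r • b) = toHom (f (r.unop • a)) b
    rw [f.map_smul]; rfl

/-- swap the arguments of a pairing -/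
def flipR {A B : Type u} [AddCommGroup A] [AddCommGroup B] [Module R A] [Module Rᵐᵒᵖ B]
    (f : B →ₗ[Rᵐᵒᵖ] CharGroup A) : A →ₗ[R] CharGroup B where
  toFun a := ofHom (AddMonoidHom.mk' (fun b => toHom (f b) a) (fun b b' => by
    rw [map_add, add_app]))
  map_add' a a' := hom_ext fun b => map_add (toHom (f b)) a a'
  map_smul' r a := hom_ext fun b => by
    change toHom (f b) (r • a) = toHom (f (MulOpposite.op r • b)) a
    rw [f.map_smul]; rfl

theorem exists_ext {A B : Type u} [AddCommGroup A] [AddCommGroup B] (f : A →+ B)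
    (hf : Function.Injective f) (c : CharGroup A) :
    ∃ c' : CharGroup B, ∀ a, toHom c' (f a) = toHom c a := by
  obtain ⟨c', h⟩ := CharacterModule.dual_surjective_of_injective f.toIntLinearMap hf c
  exact ⟨c', fun a => DFunLike.congr_fun h a⟩

theorem exists_sep {A : Type u} [AddCommGroup A] (T : AddSubgroup A) (x : A) (hx : x ∉ T) :
    ∃ c : CharGroup A, (∀ a ∈ T, toHom c a = 0) ∧ toHom c x ≠ 0 := by
  have : (QuotientAddGroup.mk x : A ⧸ T) ≠ 0 := by
    rwa [Ne, QuotientAddGroup.eq_zero_iff]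
  obtain ⟨c, hc⟩ := CharacterModule.exists_character_apply_ne_zero_of_ne_zero this
  let c0 : (A ⧸ T) →+ AddCircle (1 : ℚ) := c
  refine ⟨ofHom (c0.comp (QuotientAddGroup.mk' T)), fun a ha => ?_, hc⟩
  change c0 (QuotientAddGroup.mk a) = 0
  rw [(QuotientAddGroup.eq_zero_iff a).2 ha, map_zero]

/-- If `(F/L')⋆` is injective then any `x ∈ L'` is fixed by some `F → L'`. -/
theorem villamayor_one {F : Type u} [AddCommGroup F] [Module R F] [Module.Projective R F]
    (L : Submodule R F) (hI : Module.Injective Rᵐᵒᵖ (CharGroup (F ⧸ L))) (x : F) (hx : x ∈ L) :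
    ∃ θ : F →ₗ[R] F, (∀ y, θ y ∈ L) ∧ θ x = x := by
  classical
  obtain ⟨s, hs⟩ := Module.projective_def'.1 (inferInstance : Module.Projective R F)
  have hs' : ∀ y, Finsupp.linearCombination R id (s y) = y := fun y => LinearMap.congr_fun hs y
  let ev : (F →₀ L) →+ L := Finsupp.liftAddHom (fun e => AddMonoidHom.mk' (fun l : L => s x e • l)
    (fun a b => smul_add _ a b))
  by_cases hmem : (⟨x, hx⟩ : L) ∈ ev.range
  · obtain ⟨y, hy⟩ := hmem
    let θ : F →ₗ[R] F := Finsupp.linearCombination R (fun e => ((y e : L) : F)) ∘ₗ s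
    refine ⟨θ, fun z => ?_, ?_⟩
    · change Finsupp.linearCombination R (fun e => ((y e : L) : F)) (s z) ∈ L
      rw [Finsupp.linearCombination_apply]
      exact Submodule.sum_mem _ fun e _ => L.smul_mem _ (y e).2
    · change Finsupp.linearCombination R (fun e => ((y e : L) : F)) (s x) = x
      have h1 : ((ev y : L) : F) = x := congrArg Subtype.val hy
      have h2 : ((ev y : L) : F) = ∑ e ∈ y.support ∪ (s x).support, s x e • ((y e : L) : F) := by
        have : ev y = ∑ e ∈ y.support, s x e • y e := rfl
        rw [this, AddSubmonoidClass.coe_finsetSum]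
        apply Finset.sum_subset_zero_on_sdiff Finset.subset_union_left
        · intro e he
          have : y e = 0 := by
            have := (Finset.mem_sdiff.1 he).2
            rwa [Finsupp.notMem_support_iff] at this
          simp [this]
        · intro e _; rfl
      refine Eq.trans ?_ (h2.symm.trans h1)
      rw [Finsupp.linearCombination_apply, Finsupp.sum]
      apply Finset.sum_subset_zero_on_sdiff Finset.subset_union_right
      · intro e he
        have : s x e = 0 := by
          have := (Finset.mem_sdiff.1 he).2
          rwa [Finsupp.notMem_support_iff] at this
        simp [this]
      · intro e _; rfl
  · exfalso
    obtain ⟨χ, hχ, hne⟩ := exists_sep ev.range ⟨x, hx⟩ hmem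
    have hχ' : ∀ e, ∀ l : L, toHom χ (s x e • l) = 0 := fun e l => hχ _ ⟨Finsupp.single e l, by
      simp [ev]⟩
    obtain ⟨ψ, hψ⟩ := exists_ext L.subtype.toAddMonoidHom L.subtype_injective χ
    let i := dualR L.mkQ
    have hi : Function.Injective i := by
      intro c c' h
      refine hom_ext fun m => ?_
      obtain ⟨a, rfl⟩ := L.mkQ_surjective m
      exact congrArg (fun c => toHom c a) h
    obtain ⟨r, hr⟩ := hI.out i hi LinearMap.id
    have hfac : ∀ c : CharGroup F, (∀ l : L, toHom c l = 0) → i (r c) = c := by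
      intro c hc
      have : ∃ t, i t = c := by
        refine ⟨ofHom (QuotientAddGroup.lift L.toAddSubgroup (toHom c) (fun l hl => hc ⟨l, hl⟩)), ?_⟩
        rfl
      obtain ⟨t, rfl⟩ := this
      rw [hr]; rfl
    have key : ∀ e, ∀ y : F, toHom (ψ - i (r ψ)) (s x e • y) = 0 := by
      intro e y
      have h1 : i (r (MulOpposite.op (s x e) • ψ)) = MulOpposite.op (s x e) • ψ := by
        apply hfac
        intro l
        rw [smulR_apply]
        exact (hψ (s x e • l)).trans (hχ' e l)
      rw [map_smul, map_smul] at h1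
      have h2 := congrArg (fun c => toHom c y) h1
      simp only [smulR_apply, MulOpposite.unop_op] at h2
      rw [sub_app, h2, sub_self]
    apply hne
    have h3 : toHom (ψ - i (r ψ)) x = toHom χ ⟨x, hx⟩ := by
      rw [sub_app]
      have : toHom (i (r ψ)) x = 0 := by
        change toHom (r ψ) (L.mkQ x) = 0
        rw [Submodule.mkQ_apply, (Submodule.Quotient.mk_eq_zero L).2 hx, map_zero]
      rw [this, sub_zero]
      exact hψ ⟨x, hx⟩
    rw [← h3, ← hs' x, Finsupp.linearCombination_apply, Finsupp.sum, map_sum]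
    exact Finset.sum_eq_zero fun e _ => key e _

theorem villamayor {F : Type u} [AddCommGroup F] [Module R F] [Module.Projective R F]
    (L : Submodule R F) (hI : Module.Injective Rᵐᵒᵖ (CharGroup (F ⧸ L))) (m : ℕ) :
    ∀ x : Fin m → F, (∀ i, x i ∈ L) →
    ∃ θ : F →ₗ[R] F, (∀ y, θ y ∈ L) ∧ ∀ i, θ (x i) = x i := by
  induction m with
  | zero => exact fun x _ => ⟨0, fun y => L.zero_mem, fun i => i.elim0⟩
  | succ m ih =>
    intro x hx
    obtain ⟨θ, h1, h2⟩ := villamayor_one L hI (x 0) (hx 0)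
    obtain ⟨θ', h1', h2'⟩ := ih (fun i => x i.succ - θ (x i.succ))
      (fun i => L.sub_mem (hx _) (h1 _))
    refine ⟨θ + θ' - θ' ∘ₗ θ, fun y => L.sub_mem (L.add_mem (h1 _) (h1' _)) (h1' _), fun i => ?_⟩
    refine Fin.cases ?_ (fun j => ?_) i
    · simp [h2]
    · have := h2' j
      rw [map_sub] at this
      simp only [LinearMap.sub_apply, LinearMap.add_apply, LinearMap.comp_apply]
      rw [add_sub_assoc, this]; abel

theorem retraction {F : Type u} [AddCommGroup F] [Module R F] [Module.Projective R F]
    (L : Submodule R F) (hI : Module.Injective Rᵐᵒᵖ (CharGroup (F ⧸ L))) (hL : L.FG) :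
    ∃ θ : F →ₗ[R] L, ∀ x : L, θ x = x := by
  obtain ⟨m, x, hx⟩ := Submodule.fg_iff_exists_fin_generating_family.1 hL
  obtain ⟨θ, h1, h2⟩ := villamayor L hI m x (fun i => hx ▸ Submodule.subset_span ⟨i, rfl⟩)
  refine ⟨θ.codRestrict L h1, fun y => Subtype.ext ?_⟩
  have : L ≤ LinearMap.eqLocus θ LinearMap.id := by
    rw [← hx, Submodule.span_le]
    rintro _ ⟨i, rfl⟩
    exact h2 i
  exact this y.2

theorem swap_ext {F : Type u} [AddCommGroup F] [Module R F] [Module.Projective R F]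
    (L : Submodule R F) (N : ModuleCat.{u} Rᵐᵒᵖ)
    (H : ∀ g : L →ₗ[R] CharGroup N, ∃ γ : F →ₗ[R] CharGroup N, ∀ l : L, γ l = g l) :
    extVanish Rᵐᵒᵖ 1 N (ModuleCat.of Rᵐᵒᵖ (CharGroup (F ⧸ L))) := by
  let P := ModuleCat.of Rᵐᵒᵖ (N →₀ Rᵐᵒᵖ)
  let p : P →ₗ[Rᵐᵒᵖ] N := Finsupp.linearCombination Rᵐᵒᵖ id
  have hp : Function.Surjective p := Finsupp.linearCombination_id_surjective Rᵐᵒᵖ N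
  have : Module.Projective Rᵐᵒᵖ P := inferInstanceAs (Module.Projective Rᵐᵒᵖ (N →₀ Rᵐᵒᵖ))
  rw [extVanish_one_iff p hp]
  intro h
  let h0 : LinearMap.ker p →ₗ[Rᵐᵒᵖ] CharGroup (F ⧸ L) := h
  let res : CharGroup P →ₗ[R] CharGroup (LinearMap.ker p) := dualL (LinearMap.ker p).subtype
  have hres : Function.Surjective res := fun c => by
    obtain ⟨c', hc'⟩ := exists_ext (LinearMap.ker p).subtype.toAddMonoidHom
      (LinearMap.ker p).subtype_injective c
    exact ⟨c', hom_ext hc'⟩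
  obtain ⟨β, hβ⟩ := Module.projective_lifting_property res (flipR h0 ∘ₗ L.mkQ) hres
  have hβ' : ∀ (y : F) (z : LinearMap.ker p), toHom (β y) z = toHom (h0 z) (L.mkQ y) := fun y z =>
    congrArg (fun c => toHom c z) (LinearMap.congr_fun hβ y)
  let j : CharGroup N →ₗ[R] CharGroup P := dualL p
  have hj : Function.Injective j := by
    intro c c' h
    refine hom_ext fun m => ?_
    obtain ⟨a, rfl⟩ := hp m
    exact congrArg (fun c => toHom c a) h
  have hmem : ∀ l : L, (β ∘ₗ L.subtype) l ∈ LinearMap.range j := by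
    intro l
    have hz : ∀ z ∈ LinearMap.ker p, toHom (β l) z = 0 := fun z hz => by
      rw [hβ' l ⟨z, hz⟩, Submodule.mkQ_apply, (Submodule.Quotient.mk_eq_zero L).2 l.2, map_zero]
    let c : N →+ AddCircle (1 : ℚ) := (QuotientAddGroup.lift (LinearMap.ker p).toAddSubgroup
      (toHom (β l)) hz).comp (p.quotKerEquivOfSurjective hp).symm.toLinearMap.toAddMonoidHom
    refine ⟨ofHom c, hom_ext fun a => ?_⟩
    change QuotientAddGroup.lift (LinearMap.ker p).toAddSubgroup
      (toHom (β l)) hz ((p.quotKerEquivOfSurjective hp).symm (p a)) = toHom (β l) a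
    have : (p.quotKerEquivOfSurjective hp).symm (p a) = (LinearMap.ker p).mkQ a := by
      rw [LinearEquiv.symm_apply_eq]; rfl
    rw [this]; rfl
  let e := LinearEquiv.ofInjective j hj
  let g : L →ₗ[R] CharGroup N := e.symm.toLinearMap ∘ₗ
    LinearMap.codRestrict (LinearMap.range j) (β ∘ₗ L.subtype) hmem
  have hg : ∀ l, j (g l) = β l := fun l => congrArg Subtype.val (e.apply_symm_apply ⟨_, hmem l⟩)
  obtain ⟨γ, hγ⟩ := H g
  have hk : L ≤ LinearMap.ker (β - j ∘ₗ γ) := by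
    intro l hl
    change β l - j (γ l) = 0
    rw [hγ ⟨l, hl⟩, hg, sub_self]
  refine ⟨flipL (L.liftQ (β - j ∘ₗ γ) hk), fun z => hom_ext fun m => ?_⟩
  obtain ⟨y, rfl⟩ := L.mkQ_surjective m
  change toHom (β y) z - toHom (γ y) (p z) = toHom (h0 z) (L.mkQ y)
  rw [hβ', show p z = 0 from z.2, map_zero, sub_zero]

end chars

/-- Concrete resolution of a special super finitely presented module. -/
theorem special_res {S : Type u} [Ring S] {n : ℕ} {K : ModuleCat.{u} S}
    (h : IsSpecialSFP S n K) : ∃ (F : ℕ → ModuleCat.{u} S)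
    (d : ∀ i, F (i + 1) →ₗ[S] F i) (π : F 0 →ₗ[S] K),
    (∀ i, Module.Projective S (F i)) ∧ (∀ i, Module.Finite S (F i)) ∧ Function.Surjective π ∧
    Function.Exact (d 0) π ∧ ∀ i, Function.Exact (d (i + 1)) (d i) := by
  obtain ⟨U, F, d, π, hp, hf, hs, h0, he, hK⟩ := h
  cases n with
  | zero =>
    rw [if_pos rfl] at hK
    obtain ⟨e⟩ := hK
    refine ⟨F, d, e.symm.toLinearMap ∘ₗ π, hp, fun i => hf i (Nat.zero_le _),
      e.symm.surjective.comp hs, fun x => ?_, he⟩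
    rw [← h0 x]
    simp
  | succ n =>
    rw [if_neg (Nat.succ_ne_zero n)] at hK
    obtain ⟨e⟩ := hK
    refine ⟨fun i => F (n + 1 + i), fun i => d (n + 1 + i),
      e.symm.toLinearMap ∘ₗ (d n).rangeRestrict, fun i => hp _, fun i => hf _ (Nat.le_add_right _ _),
      e.symm.surjective.comp (d n).surjective_rangeRestrict, fun x => ?_, fun i => he _⟩
    refine Iff.trans ?_ (he n x)
    change e.symm ((d n).rangeRestrict x) = 0 ↔ _
    rw [LinearEquiv.map_eq_zero_iff, ← Submodule.coe_eq_zero]; rfl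

/-- The extension form of the vanishing of higher `Ext`. -/
theorem extVanish_iff' {S : Type u} [Ring S]
    {K : ModuleCat.{u} S} (F : ℕ → ModuleCat.{u} S)
    (d : ∀ i, F (i + 1) →ₗ[S] F i) (π : F 0 →ₗ[S] K)
    (hp : ∀ i, Module.Projective S (F i)) (hs : Function.Surjective π)
    (h0 : Function.Exact (d 0) π) (he : ∀ i, Function.Exact (d (i + 1)) (d i))
    (k : ℕ) (M : ModuleCat.{u} S) :
    extVanish S (k + 1) K M ↔ ∀ g : LinearMap.range (d k) →ₗ[S] M,
      ∃ γ : F k →ₗ[S] M, ∀ l : LinearMap.range (d k), γ l = g l := by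
  rw [extVanish_iff F d π hp hs h0 he]
  constructor
  · intro H g
    obtain ⟨ψ, hψ⟩ := H (g ∘ₗ (d k).rangeRestrict) (by
      ext x
      have : (d k).rangeRestrict (d (k + 1) x) = 0 :=
        Subtype.ext ((he k).apply_apply_eq_zero x)
      simp [this])
    refine ⟨ψ, ?_⟩
    rintro ⟨_, y, rfl⟩
    exact LinearMap.congr_fun hψ y
  · intro H φ hφ
    have hk : LinearMap.ker (d k) ≤ LinearMap.ker φ := by
      intro x hx
      obtain ⟨y, rfl⟩ := (he k x).1 hx
      exact LinearMap.congr_fun hφ y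
    obtain ⟨ψ, hψ⟩ := H ((LinearMap.ker (d k)).liftQ φ hk ∘ₗ
      (d k).quotKerEquivRange.symm.toLinearMap)
    refine ⟨ψ, ?_⟩
    ext x
    refine (hψ ⟨d k x, x, rfl⟩).trans ?_
    have : (d k).quotKerEquivRange.symm ⟨d k x, x, rfl⟩ = (LinearMap.ker (d k)).mkQ x := by
      rw [LinearEquiv.symm_apply_eq]; rfl
    rw [LinearMap.comp_apply, LinearEquiv.coe_coe, this]; rfl

end Aux14

/-- `l.n.sp.gldim(R) ≤ k` iff every `(n,k)`-weak cotorsion right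
module is injective. -/
theorem stmt14 (R : Type u) [Ring R] (n k : ℕ) :
    lnspGldimLE R n k ↔
      (∀ M : ModuleCat.{u} Rᵐᵒᵖ, IsNKWeakCotorsion R n k M →
        Module.Injective Rᵐᵒᵖ M) := by
  constructor
  · intro h M hM
    exact Aux14.injective_of_ext fun N => hM N fun K hK => h K hK _
  · intro h K hK
    obtain ⟨F, d, π, hp, hf, hs, h0, he⟩ := Aux14.special_res hK
    have := hp k
    have hI := h (ModuleCat.of Rᵐᵒᵖ (CharGroup (F k ⧸ LinearMap.range (d k)))) (fun N hN =>
      Aux14.swap_ext (LinearMap.range (d k)) N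
        ((Aux14.extVanish_iff' F d π hp hs h0 he k _).1 (hN K hK)))
    have := hf (k + 1)
    obtain ⟨θ, hθ⟩ := Aux14.retraction (LinearMap.range (d k)) hI
      (Submodule.fg_range (d k))
    intro M
    refine (Aux14.extVanish_iff' F d π hp hs h0 he k M).2 fun g => ⟨g ∘ₗ θ, fun l => ?_⟩
    rw [LinearMap.comp_apply, hθ]
end

section
/- For a ring R and non-negative integers n, k: l.n.sp.gldim(R) ≤ k if and only if every (n,k)-weak cotorsion right R-module has n-weak flat dimension at most k. -/
/-!
Common definitions for formalizing "(n,k)-weak cotorsion modules" over an arbitrary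
(not necessarily commutative) ring `R`.  Left `R`-modules are objects of
`ModuleCat R`, right `R`-modules are objects of `ModuleCat Rᵐᵒᵖ`.

Since Mathlib does not provide `Tor` of a right module with a left module over a
noncommutative ring, we encode the vanishing of `Tor_i^R(N, M)` (for `N` a right
module and `M` a left module) by the equivalent condition
`Ext^i_{Rᵐᵒᵖ}(N, M⋆) = 0`, where `M⋆ = Hom_ℤ(M, ℚ/ℤ)` is the character module
(a right module).  This is equivalent because `ℚ/ℤ` is an injective cogenerator:
`Ext^i_{Rᵐᵒᵖ}(N, M⋆) ≅ (Tor_i^R(N, M))⋆`, and an abelian group vanishes iff its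
character group does.
-/

open CategoryTheory

universe u

theorem extVanish_iff_of_res {S : Type u} [Ring S] {A : ModuleCat.{u} S}
    (P : ProjectiveResolution A) (i : ℕ) (B : ModuleCat.{u} S) :
    extVanish S (i + 1) A B ↔
      ∀ h : P.complex.X (i + 1) ⟶ B, P.complex.d (i + 2) (i + 1) ≫ h = 0 →
        ∃ h' : P.complex.X i ⟶ B, P.complex.d (i + 1) i ≫ h' = h := by
  unfold extVanish
  rw [← ModuleCat.isZero_iff_subsingleton, (P.isoExt (R := ℤ) (i + 1) B).isZero_iff,
    ← HomologicalComplex.exactAt_iff_isZero_homology,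
    HomologicalComplex.exactAt_iff' _ i (i + 1) (i + 2) (by simp) (by simp),
    ShortComplex.moduleCat_exact_iff]
  rfl

theorem extVanish_iff_of_seq {S : Type u} [Ring S] {A : ModuleCat.{u} S}
    (F : ℕ → ModuleCat.{u} S) (d : ∀ i, F (i + 1) →ₗ[S] F i) (π : F 0 →ₗ[S] A)
    (hp : ∀ i, Module.Projective S (F i)) (hπ : Function.Surjective π)
    (h0 : Function.Exact (d 0) π) (hd : ∀ i, Function.Exact (d (i + 1)) (d i))
    (i : ℕ) (B : ModuleCat.{u} S) :
    extVanish S (i + 1) A B ↔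
      ∀ h : F (i + 1) →ₗ[S] B, h ∘ₗ d (i + 1) = 0 →
        ∃ h' : F i →ₗ[S] B, h' ∘ₗ d i = h := by
  have hsq : ∀ i, ModuleCat.ofHom (d (i + 1)) ≫ ModuleCat.ofHom (d i) = 0 := by
    intro i
    ext x
    exact (hd i).apply_apply_eq_zero x
  let C : ChainComplex (ModuleCat.{u} S) ℕ :=
    ChainComplex.of (fun i => F i) (fun i => ModuleCat.ofHom (d i)) hsq
  have hCd : ∀ i, C.d (i + 1) i = ModuleCat.ofHom (d i) := fun i => by dsimp only [C]; exact ChainComplex.of_d _ _ _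
  have hz : C.d 1 0 ≫ (ModuleCat.ofHom π : C.X 0 ⟶ A) = 0 := by
    rw [hCd]
    ext x
    exact h0.apply_apply_eq_zero x
  let p : C ⟶ (ChainComplex.single₀ _).obj A :=
    (ChainComplex.toSingle₀Equiv C A).symm ⟨ModuleCat.ofHom π, hz⟩
  have hq : QuasiIso p := ⟨fun n => by
    cases n with
    | zero =>
      rw [ChainComplex.quasiIsoAt₀_iff, ShortComplex.quasiIso_iff_of_zeros']
      · refine (ShortComplex.exact_and_epi_g_iff_of_iso ?_).2
          (⟨?_, ?_⟩ : (ShortComplex.mk _ _ hz).Exact ∧ Epi (ModuleCat.ofHom π : C.X 0 ⟶ A))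
        · exact ShortComplex.isoMk (Iso.refl _) (Iso.refl _) (Iso.refl _)
        · rw [ShortComplex.moduleCat_exact_iff]
          intro x hx
          obtain ⟨y, hy⟩ := (h0 x).1 hx
          refine ⟨y, ?_⟩
          simp only [hCd]
          exact hy
        · rw [ModuleCat.epi_iff_surjective]; exact hπ
      all_goals rfl
    | succ n =>
      rw [quasiIsoAt_iff_exactAt']
      · rw [HomologicalComplex.exactAt_iff' _ (n + 2) (n + 1) n (by simp) (by simp),
          ShortComplex.moduleCat_exact_iff]
        intro x hx
        simp only [HomologicalComplex.shortComplexFunctor'_obj_g, HomologicalComplex.sc', hCd] at hx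
        obtain ⟨y, hy⟩ := (hd n x).1 hx
        refine ⟨y, ?_⟩
        simp only [HomologicalComplex.sc', HomologicalComplex.shortComplexFunctor'_obj_f, hCd]
        exact hy
      · exact ChainComplex.exactAt_succ_single_obj _ _⟩
  let P : ProjectiveResolution A :=
    { complex := C
      projective := fun n => by
        have := hp n
        exact (IsProjective.iff_projective (R := S) (F n)).1 (hp n)
      π := p
      quasiIso := hq }
  rw [extVanish_iff_of_res P i B]
  change (∀ h : F (i + 1) ⟶ B, C.d (i + 2) (i + 1) ≫ h = 0 →
        ∃ h' : F i ⟶ B, C.d (i + 1) i ≫ h' = h) ↔ _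
  simp only [hCd]
  constructor
  · intro H h hh
    obtain ⟨h', e⟩ := H (ModuleCat.ofHom h) (by ext x; exact LinearMap.congr_fun hh x)
    exact ⟨h'.hom, by rw [← ModuleCat.hom_ofHom h, ← e]; rfl⟩
  · intro H h hh
    obtain ⟨h', e⟩ := H h.hom (by ext x; exact LinearMap.congr_fun (congrArg ModuleCat.Hom.hom hh) x)
    exact ⟨ModuleCat.ofHom h', by ext x; exact LinearMap.congr_fun e x⟩

section helpers

open CharGroup

theorem char_extend {A B : Type u} [AddCommGroup A] [AddCommGroup B] (f : A →+ B)
    (c : A →+ AddCircle (1 : ℚ)) (hc : ∀ a, f a = 0 → c a = 0) :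
    ∃ c' : B →+ AddCircle (1 : ℚ), ∀ a, c' (f a) = c a := by
  let j : (A ⧸ f.ker) →+ B := QuotientAddGroup.kerLift f
  have hj : Function.Injective j := QuotientAddGroup.kerLift_injective f
  let c0 : (A ⧸ f.ker) →+ AddCircle (1 : ℚ) := QuotientAddGroup.lift f.ker c hc
  obtain ⟨c', h⟩ := CharacterModule.dual_surjective_of_injective (R := ℤ) j.toIntLinearMap hj c0
  refine ⟨c', fun a => ?_⟩
  exact DFunLike.congr_fun h (a : A ⧸ f.ker)

theorem factor_surj {S : Type u} [Ring S] {X N W : Type u} [AddCommGroup X] [AddCommGroup N]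
    [AddCommGroup W] [Module S X] [Module S N] [Module S W] (p : X →ₗ[S] N)
    (hp : Function.Surjective p) (f : X →ₗ[S] W) (h : ∀ x, p x = 0 → f x = 0) :
    ∃ g : N →ₗ[S] W, ∀ x, g (p x) = f x := by
  refine ⟨(LinearMap.ker p).liftQ f (fun x hx => h x hx) ∘ₗ
    (p.quotKerEquivOfSurjective hp).symm.toLinearMap, fun x => ?_⟩
  have : (p.quotKerEquivOfSurjective hp).symm (p x) = Submodule.Quotient.mk x := by
    rw [LinearEquiv.symm_apply_eq]; rfl
  rw [LinearMap.comp_apply, LinearEquiv.coe_coe, this]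
  rfl

variable {R : Type u} [Ring R]

/-- flip a map into a character module -/
def flipR {A N : Type u} [AddCommGroup A] [Module R A] [AddCommGroup N] [Module Rᵐᵒᵖ N]
    (f : A →ₗ[R] CharGroup N) : N →ₗ[Rᵐᵒᵖ] CharGroup A where
  toFun n := ofHom (AddMonoidHom.mk' (fun a => toHom (f a) n)
    (fun a b => by rw [map_add]; rfl))
  map_add' x y := hom_ext fun a => map_add (toHom (f a)) x y
  map_smul' r x := hom_ext fun a => by
    change toHom (f a) (r • x) = toHom (f (r.unop • a)) x
    rw [f.map_smul]; rfl

/-- flip a map into a character module -/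
def flipL {A N : Type u} [AddCommGroup A] [Module R A] [AddCommGroup N] [Module Rᵐᵒᵖ N]
    (f : N →ₗ[Rᵐᵒᵖ] CharGroup A) : A →ₗ[R] CharGroup N where
  toFun a := ofHom (AddMonoidHom.mk' (fun n => toHom (f n) a)
    (fun a b => by rw [map_add]; rfl))
  map_add' x y := hom_ext fun n => map_add (toHom (f n)) x y
  map_smul' r x := hom_ext fun n => by
    change toHom (f n) (r • x) = toHom (f (MulOpposite.op r • n)) x
    rw [f.map_smul]; rfl

/-- dual of a map of right modules -/
def dualL {M N : Type u} [AddCommGroup M] [Module Rᵐᵒᵖ M] [AddCommGroup N] [Module Rᵐᵒᵖ N]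
    (f : M →ₗ[Rᵐᵒᵖ] N) : CharGroup N →ₗ[R] CharGroup M where
  toFun c := ofHom ((toHom c).comp f.toAddMonoidHom)
  map_add' x y := hom_ext fun n => rfl
  map_smul' r x := hom_ext fun n => by
    change toHom x (MulOpposite.op r • f n) = toHom x (f (MulOpposite.op r • n))
    rw [f.map_smul]

theorem toHom_add {N : Type u} [AddCommGroup N] (c e : CharGroup N) (x : N) :
    toHom (c + e) x = toHom c x + toHom e x := rfl

theorem toHom_sub {N : Type u} [AddCommGroup N] (c e : CharGroup N) (x : N) :
    toHom (c - e) x = toHom c x - toHom e x := rfl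

theorem lemA (P Y : Type u) [AddCommGroup P] [Module R P] [AddCommGroup Y] [Module R Y]
    [Module.Projective R P] (q : P →ₗ[R] Y) (hq : Function.Surjective q)
    (X1 X0 N : Type u) [AddCommGroup X1] [Module Rᵐᵒᵖ X1] [AddCommGroup X0] [Module Rᵐᵒᵖ X0]
    [AddCommGroup N] [Module Rᵐᵒᵖ N]
    (d : X1 →ₗ[Rᵐᵒᵖ] X0) (π : X0 →ₗ[Rᵐᵒᵖ] N) (hπ : Function.Surjective π)
    (hd : Function.Exact d π)
    (hN : ∀ h : LinearMap.ker q →ₗ[R] CharGroup N, ∃ h' : P →ₗ[R] CharGroup N,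
      ∀ z : LinearMap.ker q, h' z = h z)
    (h : X1 →ₗ[Rᵐᵒᵖ] CharGroup Y) (hh : ∀ x, d x = 0 → h x = 0) :
    ∃ h' : X0 →ₗ[Rᵐᵒᵖ] CharGroup Y, ∀ x, h' (d x) = h x := by
  obtain ⟨t, ht⟩ : ∃ t : X0 →ₗ[Rᵐᵒᵖ] CharGroup P,
      ∀ x p, toHom (t (d x)) p = toHom (h x) (q p) := by
    let a : P →ₗ[R] CharGroup X1 := flipL h ∘ₗ q
    have ha : ∀ p, a p ∈ LinearMap.range (dualL d) := by
      intro p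
      obtain ⟨c', hc'⟩ := char_extend d.toAddMonoidHom (toHom (a p)) (by
        intro x hx
        change toHom (h x) (q p) = 0
        rw [hh x hx]; rfl)
      exact ⟨ofHom c', hom_ext hc'⟩
    obtain ⟨b, hb⟩ := Module.projective_lifting_property (dualL d).rangeRestrict
      (a.codRestrict _ ha) (LinearMap.surjective_rangeRestrict _)
    refine ⟨flipR b, fun x p => ?_⟩
    have := congrArg Subtype.val (LinearMap.congr_fun hb p)
    exact DFunLike.congr_fun (congrArg toHom this) x
  -- restrict to the kernel of q
  let u : X0 →ₗ[Rᵐᵒᵖ] CharGroup (LinearMap.ker q) :=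
    flipR (flipL t ∘ₗ (LinearMap.ker q).subtype)
  obtain ⟨w, hw⟩ := factor_surj π hπ u (by
    intro x hx
    obtain ⟨y, rfl⟩ := (hd x).1 hx
    refine hom_ext fun z => ?_
    change toHom (t (d y)) (z : P) = 0
    rw [ht, LinearMap.mem_ker.1 z.2, map_zero])
  obtain ⟨h', hh'⟩ := hN (flipL w)
  let v : X0 →ₗ[Rᵐᵒᵖ] CharGroup P := t - flipR h' ∘ₗ π
  have hv : ∀ x p, toHom (v x) p = toHom (t x) p - toHom (h' p) (π x) := fun x p => rfl
  obtain ⟨s, hs⟩ := factor_surj q hq (flipL v) (by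
    intro p hp
    refine hom_ext fun x => ?_
    change toHom (v x) p = 0
    rw [hv, hh' ⟨p, hp⟩]
    change _ - toHom (w (π x)) ⟨p, hp⟩ = 0
    rw [hw]
    exact sub_self _)
  refine ⟨flipR s, fun x => hom_ext fun y => ?_⟩
  obtain ⟨p, rfl⟩ := hq y
  change toHom (s (q p)) (d x) = _
  rw [hs]
  change toHom (v (d x)) p = _
  rw [hv, ht, (hd (d x)).2 ⟨x, rfl⟩, map_zero, sub_zero]

theorem lemB (F : Type u) [AddCommGroup F] [Module R F] [Module.Projective R F]
    [Module.Finite R F] (Y : Submodule R F) (hY : Y.FG)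
    (g : F →ₗ[R] CharGroup (CharGroup Y))
    (hg : ∀ (y : Y) (c : CharGroup Y), toHom (g y) c = toHom c y) :
    ∃ r : F →ₗ[R] Y, ∀ y : Y, r y = y := by
  obtain ⟨m, p, hp⟩ := Module.Finite.exists_fin' R F
  obtain ⟨s, hs⟩ := Module.projective_lifting_property p LinearMap.id hp
  have : Module.Finite R Y := Module.Finite.iff_fg.2 hY
  obtain ⟨l, e, he⟩ := Module.Finite.exists_fin' R Y
  let y : Fin l → Y := fun a => e (Pi.single a 1)
  let f : Fin m → F := fun j => p (Pi.single j 1)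
  have hf : ∀ x : F, x = ∑ j, s x j • f j := by
    intro x
    have h1 : x = p (s x) := (LinearMap.congr_fun hs x).symm
    conv_lhs => rw [h1, pi_eq_sum_univ' (s x)]
    simp only [map_sum, map_smul]
    refine Finset.sum_congr rfl fun j _ => ?_
    congr 2
  -- the map z ↦ (∑ d_aj z_j)
  let T : (Fin m → Y) →+ (Fin l → Y) :=
    AddMonoidHom.mk' (fun z a => ∑ j, s (y a) j • z j) (by
      intro z z'
      ext a
      simp [smul_add, Finset.sum_add_distrib])
  have key : y ∈ T.range := by
    by_contra hny
    have hne : (QuotientAddGroup.mk' T.range y) ≠ 0 := by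
      intro h0
      exact hny ((QuotientAddGroup.eq_zero_iff _).1 h0)
    obtain ⟨χ0, hχ0⟩ := CharacterModule.exists_character_apply_ne_zero_of_ne_zero hne
    let χ : (Fin l → Y) →+ AddCircle (1 : ℚ) :=
      AddMonoidHom.comp (show _ →+ AddCircle (1 : ℚ) from χ0) (QuotientAddGroup.mk' T.range)
    have hχT : ∀ z, χ (T z) = 0 := by
      intro z
      change χ0 (QuotientAddGroup.mk' T.range (T z)) = 0
      have : QuotientAddGroup.mk' T.range (T z) = 0 :=
        (QuotientAddGroup.eq_zero_iff _).2 ⟨z, rfl⟩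
      rw [this]; exact map_zero χ0
    have hχy : χ y ≠ 0 := hχ0
    let χc : Fin l → CharGroup Y := fun a => ofHom (χ.comp (AddMonoidHom.single (fun _ => Y) a))
    have hχc : ∀ z : Fin l → Y, χ z = ∑ a, toHom (χc a) (z a) := by
      intro z
      conv_lhs => rw [← Finset.univ_sum_single z]
      rw [map_sum]
      rfl
    have hz : ∀ j, ∑ a, MulOpposite.op (s (y a) j) • χc a = 0 := by
      intro j
      refine hom_ext fun z => ?_
      have h1 := hχT (Pi.single j z)
      rw [hχc] at h1
      have h2 : toHom (∑ a, MulOpposite.op (s (y a) j) • χc a) z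
          = ∑ a, toHom (MulOpposite.op (s (y a) j) • χc a) z :=
        map_sum (AddMonoidHom.eval z : (Y →+ AddCircle (1 : ℚ)) →+ _) _ _
      rw [h2]
      change _ = (0 : AddCircle (1 : ℚ))
      rw [← h1]
      refine Finset.sum_congr rfl fun a _ => ?_
      change toHom (χc a) (s (y a) j • z) = toHom (χc a) (∑ i, s (y a) i • (Pi.single j z : Fin m → Y) i)
      congr 1
      rw [Finset.sum_eq_single j]
      · simp
      · intro i _ hi
        simp [hi]
      · simp
    apply hχy
    rw [hχc]
    have h3 : ∀ a, toHom (χc a) (y a)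
        = ∑ j, toHom (g (f j)) (MulOpposite.op (s (y a) j) • χc a) := by
      intro a
      rw [← hg]
      conv_lhs => rw [hf (y a : F)]
      rw [map_sum]
      have h2 : toHom (∑ j, g (s (y a) j • f j)) (χc a)
          = ∑ j, toHom (g (s (y a) j • f j)) (χc a) :=
        map_sum (AddMonoidHom.eval (χc a) : (CharGroup Y →+ AddCircle (1 : ℚ)) →+ _) _ _
      rw [h2]
      refine Finset.sum_congr rfl fun j _ => ?_
      rw [map_smul]
      rfl
    rw [Finset.sum_congr rfl fun a _ => h3 a, Finset.sum_comm]
    refine Finset.sum_eq_zero fun j _ => ?_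
    rw [← map_sum, hz, map_zero]
  obtain ⟨z, hz⟩ := key
  let r : F →ₗ[R] Y := ∑ j, ((LinearMap.proj j ∘ₗ s).smulRight (z j))
  have hr : ∀ x, r x = ∑ j, s x j • z j := by
    intro x
    simp [r]
  refine ⟨r, fun x => ?_⟩
  obtain ⟨x, rfl⟩ := he x
  have : r ∘ₗ Y.subtype ∘ₗ e = e := by
    refine LinearMap.pi_ext' fun a => LinearMap.ext_ring ?_
    change r (y a) = y a
    rw [hr]
    exact congrFun hz a
  exact LinearMap.congr_fun this x

theorem sfp_res {n : ℕ} {K : ModuleCat.{u} R} (hK : IsSpecialSFP R n K) :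
    ∃ (F : ℕ → ModuleCat.{u} R) (d : ∀ i, F (i + 1) →ₗ[R] F i) (π : F 0 →ₗ[R] K),
      (∀ i, Module.Projective R (F i)) ∧ (∀ i, Module.Finite R (F i)) ∧
      Function.Surjective π ∧ Function.Exact (d 0) π ∧
      (∀ i, Function.Exact (d (i + 1)) (d i)) ∧
      IsSpecialSFP R n (ModuleCat.of R (LinearMap.range (d 0))) := by
  obtain ⟨U, F, d, π, hp, hf, hπ, h0, hd, hK⟩ := hK
  cases n with
  | zero =>
    simp only [if_true] at hK
    obtain ⟨e⟩ := hK
    refine ⟨F, d, e.symm.toLinearMap ∘ₗ π, hp, fun i => hf i (Nat.zero_le _),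
      e.symm.surjective.comp hπ, ?_, hd, ?_⟩
    · intro x
      rw [← h0 x]
      simp
    · refine ⟨ModuleCat.of R (LinearMap.range (d 0)), fun i => F (i + 1), fun i => d (i + 1),
        (d 0).rangeRestrict, fun i => hp _, fun i _ => hf _ (Nat.zero_le _),
        LinearMap.surjective_rangeRestrict _, ?_, fun i => hd _, ?_⟩
      · intro x
        rw [← hd 0 x, ← Subtype.val_inj]
        rfl
      · simp only [if_true]
        exact ⟨LinearEquiv.refl _ _⟩
  | succ n =>
    simp only [Nat.succ_ne_zero, if_false] at hK
    obtain ⟨e⟩ := hK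
    refine ⟨fun i => F (n + 1 + i), fun i => d (n + 1 + i), e.symm.toLinearMap ∘ₗ (d n).rangeRestrict,
      fun i => hp _, fun i => hf _ (Nat.le_add_right _ _),
      e.symm.surjective.comp (LinearMap.surjective_rangeRestrict _), ?_, fun i => hd _, ?_⟩
    · intro x
      refine Iff.trans ?_ (hd n x)
      simp [← Subtype.val_inj]
    · refine ⟨ModuleCat.of R (LinearMap.range (d 0)), fun i => F (i + 1), fun i => d (i + 1),
        (d 0).rangeRestrict, fun i => hp _, fun i hi => hf _ (Nat.le_succ_of_le hi),
        LinearMap.surjective_rangeRestrict _, ?_, fun i => hd _, ?_⟩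
      · intro x
        rw [← hd 0 x, ← Subtype.val_inj]
        rfl
      · simp only [Nat.succ_ne_zero, if_false]
        exact ⟨LinearEquiv.refl _ _⟩


theorem lemA_ext (P Y : Type u) [AddCommGroup P] [Module R P] [AddCommGroup Y] [Module R Y]
    [Module.Projective R P] (q : P →ₗ[R] Y) (hq : Function.Surjective q)
    (N : ModuleCat.{u} Rᵐᵒᵖ)
    (hN : ∀ h : LinearMap.ker q →ₗ[R] CharGroup N, ∃ h' : P →ₗ[R] CharGroup N,
      ∀ z : LinearMap.ker q, h' z = h z) :
    extVanish Rᵐᵒᵖ 1 N (charRight R (ModuleCat.of R Y)) := by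
  let Q := ProjectiveResolution.of N
  rw [extVanish_iff_of_res Q 0]
  intro h hh
  have hex := (ShortComplex.moduleCat_exact_iff _).1 (Q.exact_succ 0)
  have hex0 := (ShortComplex.moduleCat_exact_iff _).1 Q.exact₀
  have hz : ∀ x, (Q.π.f 0).hom ((Q.complex.d 1 0).hom x) = 0 := fun x =>
    LinearMap.congr_fun (congrArg ModuleCat.Hom.hom Q.complex_d_comp_π_f_zero) x
  obtain ⟨h', hh'⟩ := lemA P Y q hq (Q.complex.X 1) (Q.complex.X 0) N (Q.complex.d 1 0).hom
    (Q.π.f 0).hom ((ModuleCat.epi_iff_surjective _).1 (inferInstanceAs (Epi (Q.π.f 0))))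
    (by
      intro x
      constructor
      · intro hx
        exact hex0 x hx
      · rintro ⟨y, rfl⟩
        exact hz y)
    hN h.hom (by
      intro x hx
      obtain ⟨y, rfl⟩ := hex x hx
      exact LinearMap.congr_fun (congrArg ModuleCat.Hom.hom hh) y)
  exact ⟨ModuleCat.ofHom h', by ext x; exact hh' x⟩

end helpers

/-- `l.n.sp.gldim(R) ≤ k` iff every `(n,k)`-weak cotorsion right
module has `n`-weak flat dimension at most `k`. -/
theorem stmt15 (R : Type u) [Ring R] (n k : ℕ) :
    lnspGldimLE R n k ↔
      (∀ M : ModuleCat.{u} Rᵐᵒᵖ, IsNKWeakCotorsion R n k M → nwfdLE R n k M) := by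
  constructor
  · intro H M _ K hK
    exact H K hK _
  · intro H K hK B
    obtain ⟨F, d, π, hp, hf, hπ, h0, hd, hΩ⟩ := sfp_res hK
    have hpk := hp k
    have hfk := hf k
    have hpk1 := hp (k + 1)
    have hfk1 := hf (k + 1)
    have hcot : IsNKWeakCotorsion R n k
        (charRight R (ModuleCat.of R (LinearMap.range (d k)))) := by
      intro N hN
      have h1 := hN _ hΩ
      unfold torVanish at h1
      rw [extVanish_iff_of_seq (fun i => F (i + 1)) (fun i => d (i + 1)) (d 0).rangeRestrict
        (fun i => hp _) (LinearMap.surjective_rangeRestrict _)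
        (by
          intro x
          rw [← hd 0 x, ← Subtype.val_inj]
          rfl) (fun i => hd _)] at h1
      refine lemA_ext (F (k + 1)) (LinearMap.range (d k)) (d k).rangeRestrict
        (LinearMap.surjective_rangeRestrict _) N ?_
      intro h
      have hmem : ∀ x, d (k + 1) x ∈ LinearMap.ker (d k).rangeRestrict := by
        intro x
        rw [LinearMap.ker_rangeRestrict]
        exact (hd k).apply_apply_eq_zero x
      obtain ⟨h', e⟩ := h1 (h ∘ₗ (d (k + 1)).codRestrict _ hmem) (by
        ext1 x
        have : (d (k + 1)).codRestrict _ hmem (d (k + 2) x) = 0 :=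
          Subtype.ext ((hd (k + 1)).apply_apply_eq_zero x)
        change h ((d (k + 1)).codRestrict _ hmem (d (k + 2) x)) = 0
        rw [this, map_zero])
      refine ⟨h', ?_⟩
      rintro ⟨z, hz⟩
      have hz' := hz
      rw [LinearMap.ker_rangeRestrict] at hz'
      obtain ⟨x, rfl⟩ := (hd k z).1 hz'
      exact LinearMap.congr_fun e x
    have hY := H _ hcot K hK
    unfold torVanish at hY
    rw [extVanish_iff_of_seq F d π hp hπ h0 hd] at hY ⊢
    let ev : LinearMap.range (d k) →ₗ[R] CharGroup (CharGroup (LinearMap.range (d k))) :=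
      flipL LinearMap.id
    have hdd : ∀ x, (d k).rangeRestrict (d (k + 1) x) = 0 := fun x =>
      Subtype.ext ((hd k).apply_apply_eq_zero x)
    obtain ⟨g, hg⟩ := hY (ev ∘ₗ (d k).rangeRestrict) (by
      ext1 x
      change ev ((d k).rangeRestrict (d (k + 1) x)) = 0
      rw [hdd, map_zero])
    obtain ⟨r, hr⟩ := lemB (F k) (LinearMap.range (d k)) (Submodule.FG.of_finite) g (by
      rintro ⟨_, x, rfl⟩ c
      have := LinearMap.congr_fun hg x
      exact DFunLike.congr_fun (congrArg CharGroup.toHom this) c)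
    intro h hh
    obtain ⟨h', hh'⟩ := factor_surj (d k).rangeRestrict (LinearMap.surjective_rangeRestrict _) h (by
      intro x hx
      obtain ⟨y, rfl⟩ := (hd k x).1 (congrArg Subtype.val hx)
      exact LinearMap.congr_fun hh y)
    refine ⟨h' ∘ₗ r, ?_⟩
    ext1 x
    rw [← hh' x]
    exact congrArg h' (hr ((d k).rangeRestrict x))
end

section
/- If l.n.sp.gldim(R) ≤ k, then for any k' with 0 ≤ k' ≤ k, every (n, k−k')-weak cotorsion right R-module M has injective dimension at most k'. -/
/-!
Common definitions for formalizing "(n,k)-weak cotorsion modules" over an arbitrary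
(not necessarily commutative) ring `R`.  Left `R`-modules are objects of
`ModuleCat R`, right `R`-modules are objects of `ModuleCat Rᵐᵒᵖ`.

Since Mathlib does not provide `Tor` of a right module with a left module over a
noncommutative ring, we encode the vanishing of `Tor_i^R(N, M)` (for `N` a right
module and `M` a left module) by the equivalent condition
`Ext^i_{Rᵐᵒᵖ}(N, M⋆) = 0`, where `M⋆ = Hom_ℤ(M, ℚ/ℤ)` is the character module
(a right module).  This is equivalent because `ℚ/ℤ` is an injective cogenerator:
`Ext^i_{Rᵐᵒᵖ}(N, M⋆) ≅ (Tor_i^R(N, M))⋆`, and an abelian group vanishes iff its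
character group does.
-/

open CategoryTheory

universe u

theorem extVanish_iff_aux (S : Type u) [Ring S] (i : ℕ) (A B : ModuleCat.{u} S)
    (P : ProjectiveResolution A) :
    extVanish S (i + 1) A B ↔ ∀ f : P.complex.X (i + 1) ⟶ B,
      P.complex.d (i + 2) (i + 1) ≫ f = 0 → ∃ g, P.complex.d (i + 1) i ≫ g = f := by
  unfold extVanish
  rw [← ModuleCat.isZero_iff_subsingleton, (P.isoExt (R := ℤ) (i + 1) B).isZero_iff,
    ← HomologicalComplex.exactAt_iff_isZero_homology,
    HomologicalComplex.exactAt_iff' _ i (i + 1) (i + 2) (by simp) (by simp),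
    ShortComplex.moduleCat_exact_iff]
  exact Iff.rfl

theorem extVanish_iff (S : Type u) [Ring S] (i : ℕ) (A B : ModuleCat.{u} S) :
    extVanish S (i + 1) A B ↔ Subsingleton (Abelian.Ext.{u} A B (i + 1)) := by
  have P := projectiveResolution A
  rw [extVanish_iff_aux S i A B P]
  constructor
  · intro h
    refine subsingleton_of_forall_eq 0 fun α => ?_
    obtain ⟨f, hf, rfl⟩ := P.extMk_surjective α (i + 2) rfl
    rw [P.extMk_eq_zero_iff f _ _ _ i rfl]
    exact h f hf
  · intro h f hf
    rw [← P.extMk_eq_zero_iff f (i + 2) rfl hf i rfl]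
    exact Subsingleton.elim _ _

/-- The dual of a map of right modules. -/
def charDualL (R : Type u) [Ring R] {A B : Type u} [AddCommGroup A] [AddCommGroup B]
    [Module Rᵐᵒᵖ A] [Module Rᵐᵒᵖ B] (f : A →ₗ[Rᵐᵒᵖ] B) : CharGroup B →ₗ[R] CharGroup A where
  toFun φ := CharGroup.ofHom ((CharGroup.toHom φ).comp f.toAddMonoidHom)
  map_add' _ _ := rfl
  map_smul' r φ := CharGroup.hom_ext fun m => by
    show CharGroup.toHom φ (MulOpposite.op r • f m) = CharGroup.toHom φ (f (MulOpposite.op r • m))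
    rw [f.map_smul]

/-- The dual of a map of left modules. -/
def charDualR (R : Type u) [Ring R] {A B : Type u} [AddCommGroup A] [AddCommGroup B]
    [Module R A] [Module R B] (f : A →ₗ[R] B) : CharGroup B →ₗ[Rᵐᵒᵖ] CharGroup A where
  toFun φ := CharGroup.ofHom ((CharGroup.toHom φ).comp f.toAddMonoidHom)
  map_add' _ _ := rfl
  map_smul' r φ := CharGroup.hom_ext fun m => by
    show CharGroup.toHom φ (r.unop • f m) = CharGroup.toHom φ (f (r.unop • m))
    rw [f.map_smul]

theorem char_extend_s17 {A B : Type u} [AddCommGroup A] [AddCommGroup B] (f : A →+ B)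
    (hf : Function.Injective f) (φ : CharGroup A) :
    ∃ ψ : CharGroup B, ∀ a, CharGroup.toHom ψ (f a) = CharGroup.toHom φ a := by
  obtain ⟨ψ, hψ⟩ := CharacterModule.dual_surjective_of_injective f.toIntLinearMap hf φ
  exact ⟨ψ, fun a => DFunLike.congr_fun hψ a⟩

theorem char_injective (R : Type u) [Ring R] (P : Type u) [AddCommGroup P] [Module Rᵐᵒᵖ P]
    [Module.Projective Rᵐᵒᵖ P] : Module.Injective R (CharGroup P) where
  out X Y _ _ _ _ f hf g := by
    let g' : P →ₗ[Rᵐᵒᵖ] CharGroup X :=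
      { toFun := fun p => CharGroup.ofHom
          (AddMonoidHom.mk' (fun x => CharGroup.toHom (g x) p) fun a b => by
            rw [map_add]; rfl)
        map_add' := fun p q => CharGroup.hom_ext fun x => map_add (CharGroup.toHom (g x)) p q
        map_smul' := fun r p => CharGroup.hom_ext fun x => by
          show CharGroup.toHom (g x) (r • p) = CharGroup.toHom (g (r.unop • x)) p
          rw [g.map_smul]; rfl }
    obtain ⟨h, hh⟩ := Module.projective_lifting_property (charDualR R f) g' (fun φ => by
      obtain ⟨ψ, hψ⟩ := char_extend_s17 f.toAddMonoidHom hf φ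
      exact ⟨ψ, CharGroup.hom_ext hψ⟩)
    refine ⟨{ toFun := fun y => CharGroup.ofHom
                (AddMonoidHom.mk' (fun p => CharGroup.toHom (h p) y) fun a b => by
                  rw [map_add]; rfl)
              map_add' := fun a b => CharGroup.hom_ext fun p =>
                map_add (CharGroup.toHom (h p)) a b
              map_smul' := fun r a => CharGroup.hom_ext fun p => by
                show CharGroup.toHom (h p) (r • a)
                  = CharGroup.toHom (h (MulOpposite.op r • p)) a
                rw [h.map_smul]; rfl }, fun x => CharGroup.hom_ext fun p => ?_⟩
    have := LinearMap.congr_fun hh p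
    exact DFunLike.congr_fun (congrArg CharGroup.toHom this) x

theorem nwfd_syzygy (R : Type u) [Ring R] (n j : ℕ)
    (S : ShortComplex (ModuleCat.{u} Rᵐᵒᵖ)) (hS : S.ShortExact) [hP : Projective S.X₂]
    (h : nwfdLE R n (j + 1) S.X₃) : nwfdLE R n j S.X₁ := by
  intro K hK
  have h1 := h K hK
  unfold torVanish at h1 ⊢
  rw [extVanish_iff] at h1 ⊢
  have hsurj := hS.moduleCat_surjective_g
  have hinj := hS.moduleCat_injective_f
  have hex : Function.Exact S.f S.g :=
    (ShortComplex.ShortExact.moduleCat_exact_iff_function_exact S).1 hS.exact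
  have : Module.Projective Rᵐᵒᵖ S.X₂ := (IsProjective.iff_projective _).2 hP
  have hI : Module.Injective R (CharGroup S.X₂) := char_injective R S.X₂
  have hI' : Injective (charLeft R S.X₂) := (Module.injective_iff_injective_object R _).1 hI
  let T : ShortComplex (ModuleCat.{u} R) :=
    ShortComplex.mk (X₁ := charLeft R S.X₃) (X₂ := charLeft R S.X₂) (X₃ := charLeft R S.X₁)
      (ModuleCat.ofHom (charDualL R S.g.hom)) (ModuleCat.ofHom (charDualL R S.f.hom)) (by
        ext φ
        refine CharGroup.hom_ext fun m => ?_
        show CharGroup.toHom φ (S.g (S.f m)) = 0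
        rw [hex.apply_apply_eq_zero, map_zero])
  have hT : T.ShortExact := by
    apply ModuleCat.shortComplex_shortExact
    · intro φ
      constructor
      · intro hφ
        have hφ' : ∀ m, CharGroup.toHom φ (S.f m) = 0 := fun m =>
          DFunLike.congr_fun (congrArg CharGroup.toHom hφ) m
        let g₀ : S.X₂ →+ S.X₃ := S.g.hom.toAddMonoidHom
        have hg₀ : Function.Surjective g₀ := hsurj
        refine ⟨CharGroup.ofHom (g₀.liftOfSurjective hg₀ ⟨CharGroup.toHom φ, ?_⟩), ?_⟩
        · intro x hx
          obtain ⟨m, rfl⟩ := (hex x).1 hx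
          exact hφ' m
        · refine CharGroup.hom_ext fun m => ?_
          exact AddMonoidHom.liftOfRightInverse_comp_apply g₀ _
            (Function.rightInverse_surjInv hg₀) ⟨CharGroup.toHom φ, _⟩ m
      · rintro ⟨φ, rfl⟩
        refine CharGroup.hom_ext fun m => ?_
        show CharGroup.toHom φ (S.g (S.f m)) = 0
        rw [hex.apply_apply_eq_zero, map_zero]
    · intro φ ψ hφ
      refine CharGroup.hom_ext fun m => ?_
      obtain ⟨m, rfl⟩ := hsurj m
      exact DFunLike.congr_fun (congrArg CharGroup.toHom hφ) m
    · intro φ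
      obtain ⟨ψ, hψ⟩ := char_extend_s17 S.f.hom.toAddMonoidHom hinj φ
      exact ⟨ψ, CharGroup.hom_ext hψ⟩
  refine subsingleton_of_forall_eq 0 fun (x : Abelian.Ext K T.X₃ (j + 1)) => ?_
  have : Subsingleton (Abelian.Ext.{u} K T.X₁ (j + 1 + 1)) := h1
  have hinjT : Injective T.X₂ := hI'
  obtain ⟨y, rfl⟩ := Abelian.Ext.covariant_sequence_exact₃ K hT x rfl (Subsingleton.elim _ _)
  rw [Abelian.Ext.eq_zero_of_injective y, Abelian.Ext.zero_comp]

theorem main_aux (R : Type u) [Ring R] (n j : ℕ) (M : ModuleCat.{u} Rᵐᵒᵖ)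
    (hM : IsNKWeakCotorsion R n j M) (i : ℕ) : ∀ N : ModuleCat.{u} Rᵐᵒᵖ,
    nwfdLE R n (j + i) N → extVanish Rᵐᵒᵖ (i + 1) N M := by
  induction i with
  | zero => exact fun N hN => hM N hN
  | succ i ih =>
    intro N hN
    let S : ShortComplex (ModuleCat.{u} Rᵐᵒᵖ) :=
      ShortComplex.mk (Limits.kernel.ι (Projective.π N)) (Projective.π N) (by simp)
    have hS : S.ShortExact :=
      { exact := ShortComplex.exact_kernel (Projective.π N)
        mono_f := by dsimp [S]; infer_instance
        epi_g := by dsimp [S]; infer_instance }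
    have hP : Projective S.X₂ := by dsimp [S]; infer_instance
    have h1 := ih S.X₁ (nwfd_syzygy R n (j + i) S hS hN)
    rw [extVanish_iff] at h1 ⊢
    refine subsingleton_of_forall_eq 0 fun (x : Abelian.Ext S.X₃ M (i + 1 + 1)) => ?_
    obtain ⟨y, rfl⟩ := Abelian.Ext.contravariant_sequence_exact₃ hS M x
      (Abelian.Ext.eq_zero_of_projective _) (add_comm 1 (i + 1))
    rw [Subsingleton.elim y 0, Abelian.Ext.comp_zero]

/-- if `l.n.sp.gldim(R) ≤ k` then for `0 ≤ k' ≤ k` every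
`(n, k−k')`-weak cotorsion right module has injective dimension at most `k'`. -/
theorem stmt17 (R : Type u) [Ring R] (n k : ℕ) (h : lnspGldimLE R n k)
    (k' : ℕ) (hk' : k' ≤ k) (M : ModuleCat.{u} Rᵐᵒᵖ)
    (hM : IsNKWeakCotorsion R n (k - k') M) :
    idLE Rᵐᵒᵖ k' M := by
  intro N
  refine main_aux R n (k - k') M hM k' N ?_
  rw [Nat.sub_add_cancel hk']
  exact fun K hK => h K hK _
end

section
/- For any ring R and any non-negative integer n, l.n.sp.gldim(R) ≤ w.gl.dim(R). -/
/-!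
Common definitions for formalizing "(n,k)-weak cotorsion modules" over an arbitrary
(not necessarily commutative) ring `R`.  Left `R`-modules are objects of
`ModuleCat R`, right `R`-modules are objects of `ModuleCat Rᵐᵒᵖ`.

Since Mathlib does not provide `Tor` of a right module with a left module over a
noncommutative ring, we encode the vanishing of `Tor_i^R(N, M)` (for `N` a right
module and `M` a left module) by the equivalent condition
`Ext^i_{Rᵐᵒᵖ}(N, M⋆) = 0`, where `M⋆ = Hom_ℤ(M, ℚ/ℤ)` is the character module
(a right module).  This is equivalent because `ℚ/ℤ` is an injective cogenerator:
`Ext^i_{Rᵐᵒᵖ}(N, M⋆) ≅ (Tor_i^R(N, M))⋆`, and an abelian group vanishes iff its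
character group does.
-/

open CategoryTheory

universe u

section Helpers

variable {S : Type u} [Ring S]

theorem spSFP_reduce (n : ℕ) (K : ModuleCat.{u} S) (h : IsSpecialSFP S n K) :
    ∃ (F : ℕ → ModuleCat.{u} S) (d : ∀ i, F (i + 1) →ₗ[S] F i) (π : F 0 →ₗ[S] K),
      (∀ i, Module.Projective S (F i)) ∧ (∀ i, Module.Finite S (F i)) ∧
      Function.Surjective π ∧ Function.Exact (d 0) π ∧
      (∀ i, Function.Exact (d (i + 1)) (d i)) := by
  obtain ⟨U, F, d, π, hP, hF, hs, he, hd, hK⟩ := h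
  cases n with
  | zero =>
    obtain ⟨e⟩ : Nonempty ((K : Type u) ≃ₗ[S] U) := by simpa using hK
    refine ⟨F, d, e.symm.toLinearMap ∘ₗ π, hP, fun i => hF i (Nat.zero_le _),
      e.symm.surjective.comp hs, ?_, hd⟩
    intro x
    rw [← he x]
    simp
  | succ m =>
    obtain ⟨e⟩ : Nonempty ((K : Type u) ≃ₗ[S] LinearMap.range (d m)) := by simpa using hK
    refine ⟨fun i => F (m + 1 + i), fun i => d (m + 1 + i),
      e.symm.toLinearMap ∘ₗ (d m).rangeRestrict, fun i => hP _, fun i => hF _ (by omega),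
      e.symm.surjective.comp (d m).surjective_rangeRestrict, ?_, fun i => hd _⟩
    intro x
    refine Iff.trans ?_ (hd m x)
    rw [LinearMap.comp_apply]
    simp [Subtype.ext_iff]

/-- The projective resolution attached to elementary data. -/
theorem exists_res (K : ModuleCat.{u} S) (F : ℕ → ModuleCat.{u} S)
    (d : ∀ i, F (i + 1) →ₗ[S] F i) (π : F 0 →ₗ[S] K)
    (hP : ∀ i, Module.Projective S (F i))
    (hs : Function.Surjective π) (he : Function.Exact (d 0) π)
    (hd : ∀ i, Function.Exact (d (i + 1)) (d i)) :
    ∃ (sq : ∀ i, ModuleCat.ofHom (d (i + 1)) ≫ ModuleCat.ofHom (d i) = 0)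
      (P : ProjectiveResolution K),
      P.complex = ChainComplex.of F (fun i => ModuleCat.ofHom (d i)) sq := by
  have sq : ∀ i, ModuleCat.ofHom (d (i + 1)) ≫ ModuleCat.ofHom (d i) = 0 := fun i => by
    ext x
    exact (hd i).apply_apply_eq_zero x
  have h0 : (ChainComplex.of F (fun i => ModuleCat.ofHom (d i)) sq).d 1 0 = ModuleCat.ofHom (d 0) :=
    ChainComplex.of_d F (fun i => ModuleCat.ofHom (d i)) 0
  have hz : (ChainComplex.of F (fun i => ModuleCat.ofHom (d i)) sq).d 1 0
      ≫ ModuleCat.ofHom π = 0 := by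
    rw [h0]
    ext x
    exact he.apply_apply_eq_zero x
  let p : ChainComplex.of F (fun i => ModuleCat.ofHom (d i)) sq ⟶
    (ChainComplex.single₀ (ModuleCat.{u} S)).obj K :=
      (ChainComplex.toSingle₀Equiv _ _).symm ⟨ModuleCat.ofHom π, hz⟩
  refine ⟨sq, ⟨ChainComplex.of F (fun i => ModuleCat.ofHom (d i)) sq,
    fun i => (IsProjective.iff_projective (F i)).1 (hP i), p, ⟨fun i => ?_⟩⟩, rfl⟩
  cases i with
  | zero =>
    rw [ChainComplex.quasiIsoAt₀_iff, ShortComplex.quasiIso_iff_of_zeros' _ rfl rfl rfl]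
    have hp : p.f 0 = ModuleCat.ofHom π := ChainComplex.toSingle₀Equiv_symm_apply_f_zero _ hz
    constructor
    · rw [ShortComplex.moduleCat_exact_iff]
      intro x hx
      have hx' : π x = 0 := by
        have : (p.f 0).hom x = 0 := hx
        rw [hp] at this
        exact this
      obtain ⟨y, hy⟩ := (he x).1 hx'
      refine ⟨y, ?_⟩
      have : ((ChainComplex.of F (fun i => ModuleCat.ofHom (d i)) sq).d 1 0).hom y = x := by
        rw [h0]; exact hy
      exact this
    · have : Epi (p.f 0) := by
        rw [hp]
        exact (ModuleCat.epi_iff_surjective _).2 hs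
      exact this
  | succ i =>
    rw [quasiIsoAt_iff_exactAt']
    · rw [HomologicalComplex.exactAt_iff' _ (i + 1 + 1) (i + 1) i (by simp) (by simp),
        ShortComplex.moduleCat_exact_iff]
      intro x hx
      have e1 := ChainComplex.of_d F (fun i => ModuleCat.ofHom (d i)) i
      have e2 := ChainComplex.of_d F (fun i => ModuleCat.ofHom (d i)) (i + 1)
      have hx' : d i x = 0 := by
        have : (ChainComplex.of.d F (fun i => ModuleCat.ofHom (d i)) (i + 1) i).hom x = 0 := hx
        rw [e1] at this
        exact this
      obtain ⟨y, hy⟩ := (hd i x).1 hx'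
      refine ⟨y, ?_⟩
      have : (ChainComplex.of.d F (fun i => ModuleCat.ofHom (d i)) (i + 1 + 1) (i + 1)).hom y
        = x := by
        rw [e2]; exact hy
      exact this
    · apply ChainComplex.exactAt_succ_single_obj

theorem extVanish_iff_s19 (K : ModuleCat.{u} S) (F : ℕ → ModuleCat.{u} S)
    (d : ∀ i, F (i + 1) →ₗ[S] F i) (π : F 0 →ₗ[S] K)
    (hP : ∀ i, Module.Projective S (F i))
    (hs : Function.Surjective π) (he : Function.Exact (d 0) π)
    (hd : ∀ i, Function.Exact (d (i + 1)) (d i)) (k : ℕ) (M : ModuleCat.{u} S) :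
    extVanish S (k + 1) K M ↔ ∀ f : F (k + 1) →ₗ[S] M, f ∘ₗ d (k + 1) = 0 →
      ∃ g : F k →ₗ[S] M, g ∘ₗ d k = f := by
  obtain ⟨sq, P, hPc⟩ := exists_res K F d π hP hs he hd
  have e1 := ChainComplex.of_d F (fun i => ModuleCat.ofHom (d i)) k
  have e2 := ChainComplex.of_d F (fun i => ModuleCat.ofHom (d i)) (k + 1)
  unfold extVanish
  rw [← ModuleCat.isZero_iff_subsingleton, (P.isoExt (R := ℤ) (k + 1) M).isZero_iff, hPc,
    ← HomologicalComplex.exactAt_iff_isZero_homology,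
    HomologicalComplex.exactAt_iff' _ k (k + 1) (k + 1 + 1) (by simp) (by simp),
    ShortComplex.moduleCat_exact_iff]
  constructor
  · intro H f hf
    obtain ⟨g, hg⟩ := H (ModuleCat.ofHom f : F (k + 1) ⟶ M) (by
      have : ChainComplex.of.d F (fun i => ModuleCat.ofHom (d i)) (k + 1 + 1) (k + 1) ≫
        ModuleCat.ofHom f = 0 := by
        rw [e2, ← ModuleCat.ofHom_comp, hf]; rfl
      exact this)
    change F k ⟶ M at g
    have hg' : ChainComplex.of.d F (fun i => ModuleCat.ofHom (d i)) (k + 1) k ≫ g =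
      ModuleCat.ofHom f := hg
    rw [e1] at hg'
    exact ⟨g.hom, by simpa using congrArg ModuleCat.Hom.hom hg'⟩
  · intro H f hf
    change F (k + 1) ⟶ M at f
    have hf' : ChainComplex.of.d F (fun i => ModuleCat.ofHom (d i)) (k + 1 + 1) (k + 1) ≫ f
      = 0 := hf
    rw [e2] at hf'
    obtain ⟨g, hg⟩ := H f.hom (by simpa using congrArg ModuleCat.Hom.hom hf')
    refine ⟨(ModuleCat.ofHom g : F k ⟶ M), ?_⟩
    have : ChainComplex.of.d F (fun i => ModuleCat.ofHom (d i)) (k + 1) k ≫ ModuleCat.ofHom g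
      = f := by
      rw [e1, ← ModuleCat.ofHom_comp, hg]; rfl
    exact this

/-- Evaluation map into the double character module. -/
def evDD (M : ModuleCat.{u} S) : M →ₗ[S] charLeft S (charRight S M) where
  toFun m := CharGroup.ofHom (N := CharGroup M)
    (AddMonoidHom.mk' (fun c => CharGroup.toHom c m) (fun _ _ => rfl))
  map_add' a b := CharGroup.hom_ext (N := CharGroup M) fun c => map_add (CharGroup.toHom c) a b
  map_smul' r a := CharGroup.hom_ext (N := CharGroup M) fun c => rfl

theorem exists_dual_basis (P : Type u) [AddCommGroup P] [Module S P] [Module.Projective S P]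
    [Module.Finite S P] : ∃ (n : ℕ) (e : Fin n → P) (c : Fin n → P →ₗ[S] S),
      ∀ x, ∑ i, c i x • e i = x := by
  obtain ⟨n, f, g, -, -, h⟩ := Module.Finite.exists_comp_eq_id_of_projective S P
  refine ⟨n, fun i => f (Pi.single i 1), fun i => LinearMap.proj i ∘ₗ g, fun x => ?_⟩
  conv_rhs => rw [← LinearMap.id_apply (R := S) x, ← h, LinearMap.comp_apply]
  rw [LinearMap.pi_apply_eq_sum_univ f (g x)]
  simp only [LinearMap.comp_apply, LinearMap.proj_apply]
  refine Finset.sum_congr rfl fun i _ => ?_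
  congr 2
  ext j
  simp [Pi.single_apply, eq_comm]

theorem key (P Q : Type u) [AddCommGroup P] [Module S P] [Module.Projective S P]
    [Module.Finite S P] [AddCommGroup Q] [Module S Q] [Module.Projective S Q]
    [Module.Finite S Q] (d : P →ₗ[S] Q) (M : ModuleCat.{u} S) (f : P →ₗ[S] M)
    (g : Q →ₗ[S] charLeft S (charRight S M)) (hg : g ∘ₗ d = evDD M ∘ₗ f) :
    ∃ g' : Q →ₗ[S] M, g' ∘ₗ d = f := by
  obtain ⟨n, e, c, hc⟩ := exists_dual_basis (S := S) P
  obtain ⟨m, e', c', hc'⟩ := exists_dual_basis (S := S) Q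
  let I : AddSubgroup (P →ₗ[S] M) :=
    (AddMonoidHom.mk' (fun h : Q →ₗ[S] M => h ∘ₗ d) (fun _ _ => rfl)).range
  suffices hI : f ∈ I by
    obtain ⟨g', h'⟩ := hI
    exact ⟨g', h'⟩
  rw [← QuotientAddGroup.eq_zero_iff]
  refine CharacterModule.eq_zero_of_character_apply fun ψ => ?_
  let χ : (P →ₗ[S] M) →+ AddCircle (1 : ℚ) :=
    AddMonoidHom.comp (ψ : _ →+ AddCircle (1 : ℚ)) (QuotientAddGroup.mk' I)
  have hχ : ∀ h : Q →ₗ[S] M, χ (h ∘ₗ d) = 0 := fun h => by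
    have : ((h ∘ₗ d : P →ₗ[S] M) : (P →ₗ[S] M) ⧸ I) = 0 :=
      (QuotientAddGroup.eq_zero_iff _).2 ⟨h, rfl⟩
    change ψ ((h ∘ₗ d : P →ₗ[S] M) : (P →ₗ[S] M) ⧸ I) = 0
    rw [this, map_zero]
  change χ f = 0
  let χi : Fin n → CharGroup M := fun i => CharGroup.ofHom
    (χ.comp (AddMonoidHom.mk' (fun x : M => (c i).smulRight x)
      (fun a b => by ext; simp)))
  have hχi : ∀ h : P →ₗ[S] M, χ h = ∑ i, CharGroup.toHom (χi i) (h (e i)) := fun h => by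
    change χ h = ∑ i, χ ((c i).smulRight (h (e i)))
    rw [← map_sum]
    congr 1
    ext x
    conv_lhs => rw [← hc x]
    simp
  have h1 : χ f = ∑ i, CharGroup.toHom (N := CharGroup M) (g (d (e i))) (χi i) := by
    rw [hχi]
    refine Finset.sum_congr rfl fun i _ => ?_
    have := LinearMap.congr_fun hg (e i)
    rw [LinearMap.comp_apply, LinearMap.comp_apply] at this
    rw [this]
    rfl
  have h2 : ∀ i, CharGroup.toHom (N := CharGroup M) (g (d (e i))) (χi i) =
      ∑ j, CharGroup.toHom (N := CharGroup M) (g (e' j))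
        (MulOpposite.op (c' j (d (e i))) • χi i) := fun i => by
    conv_lhs => rw [← hc' (d (e i)), map_sum]
    simp only [map_smul]
    let E : CharGroup (CharGroup M) →+ AddCircle (1 : ℚ) :=
      AddMonoidHom.mk' (fun γ => CharGroup.toHom γ (χi i)) (fun _ _ => rfl)
    exact map_sum E (fun j => (c' j (d (e i)) • g (e' j) : charLeft S (charRight S M))) _
  rw [h1, Finset.sum_congr rfl fun i _ => h2 i, Finset.sum_comm]
  refine Finset.sum_eq_zero fun j _ => ?_
  rw [← map_sum]
  have h3 : ∑ i, MulOpposite.op (c' j (d (e i))) • χi i = 0 := by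
    refine CharGroup.hom_ext fun x => ?_
    let E : CharGroup M →+ AddCircle (1 : ℚ) :=
      AddMonoidHom.mk' (fun γ => CharGroup.toHom γ x) (fun _ _ => rfl)
    change E _ = 0
    rw [map_sum, ← hχ ((c' j).smulRight x), hχi]
    rfl
  rw [h3, map_zero]

end Helpers

/-- `l.n.sp.gldim(R) ≤ w.gl.dim(R)` for any `n`. -/
theorem stmt19 (R : Type u) [Ring R] (n : ℕ) :
    ∀ k, wGldimLE R k → lnspGldimLE R n k := by
  intro k hw K hK M
  obtain ⟨F, d, π, hP, hF, hs, he, hd⟩ := spSFP_reduce n K hK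
  rw [extVanish_iff_s19 K F d π hP hs he hd]
  intro f hf
  obtain ⟨g, hg⟩ := (extVanish_iff_s19 K F d π hP hs he hd k _).1 (hw (charRight R M) K)
    (evDD M ∘ₗ f) (by rw [LinearMap.comp_assoc, hf, LinearMap.comp_zero])
  have := hP k
  have := hF k
  have := hP (k + 1)
  have := hF (k + 1)
  exact key _ _ (d k) M f g hg
end
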